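/- For every k ≥ 0 and every c ∈ C^k(A,M), the element dc defined by the formulas below lies in C^{k+1}(A,M) (i.e., it satisfies conditions B1, B2, B3) and d(dc) = 0. Hence (C^•(A,M), d) is a cohomology complex. -/

import Mathlib

namespace LCC

/-! ### Index utilities -/

/-- Skip one index: the increasing enumeration of `{0,…,k} \ {i}`. -/
def skip1 (i r : ℕ) : ℕ := if r < i then r else r + 1

/-- Skip two indices `i < j`: the increasing enumeration of `{0,…,k+1} \ {i,j}`. -/
def skip2 (i j r : ℕ) : ℕ := if r < i then r else if r + 1 < j then r + 1 else r + 2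

/-- Remove the `i`-th entry of a tuple. -/
def rm1 {α : Type*} {k : ℕ} (i : ℕ) (a : Fin (k+1) → α) : Fin k → α :=
  fun r => a ⟨skip1 i r.1, by have := r.2; unfold skip1; split <;> omega⟩

/-- Remove the `i`-th and `j`-th entries (for `i < j`) of a tuple. -/
def rm2 {α : Type*} {k : ℕ} (i j : ℕ) (a : Fin (k+2) → α) : Fin k → α :=
  fun r => a ⟨skip2 i j r.1, by
    have := r.2; unfold skip2; split
    · omega
    · split <;> omega⟩

/-- Total weight of a multi-index. -/
def wt {k : ℕ} (ν : Fin k → ℕ) : ℕ := ∑ r, ν r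

/-- The multinomial coefficient `(|m| + s)! / (∏ mᵣ! · s!)`. -/
def mnom {K : ℕ} (m : Fin K → ℕ) (s : ℕ) : ℕ :=
  (wt m + s).factorial / ((∏ r, (m r).factorial) * s.factorial)

variable (F : Type*) [Field F]

/-- A Lie conformal algebra over `F`: an `F[∂]`-module `A` (given by the linear
endomorphism `D`), together with a `λ`-bracket recorded through its coefficients:
`[a_λ b] = ∑ₙ (br a b n) λⁿ`, satisfying sesquilinearity, skew-symmetry and the
Jacobi identity (all written in terms of coefficients of the `λ`-expansions). -/
structure LCA (A : Type*) [AddCommGroup A] [Module F A] where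
  D : A →ₗ[F] A
  br : A →ₗ[F] A →ₗ[F] (ℕ → A)
  br_fin : ∀ a b, (Function.support (br a b)).Finite
  sesq_left_zero : ∀ a b, br (D a) b 0 = 0
  sesq_left : ∀ a b n, br (D a) b (n+1) = - br a b n
  sesq_right : ∀ a b n, br a (D b) n
      = D (br a b n) + (if n = 0 then 0 else br a b (n-1))
  skew : ∀ a b m, br a b m
      = - ∑ᶠ n, ((-1 : F)^n * (n.choose m : F)) • ((D ^ (n - m)) (br b a n))
  jacobi : ∀ a b c m n,
      br a (br b c n) m - br b (br a c m) n
        = ∑ j ∈ Finset.range (m+1), (((n+j).choose j : F)) • br (br a b (m-j)) c (n+j)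

/-- A module over a Lie conformal algebra: an `F[∂]`-module `M` with a `λ`-action
of `A`, given through the coefficients `a_λ v = ∑ₙ (act a v n) λⁿ`, satisfying
sesquilinearity and the Jacobi identity. -/
structure LCAMod {A : Type*} [AddCommGroup A] [Module F A] (L : LCA F A)
    (M : Type*) [AddCommGroup M] [Module F M] where
  D : M →ₗ[F] M
  act : A →ₗ[F] M →ₗ[F] (ℕ → M)
  act_fin : ∀ a m, (Function.support (act a m)).Finite
  sesq_left_zero : ∀ a m, act (L.D a) m 0 = 0
  sesq_left : ∀ a m n, act (L.D a) m (n+1) = - act a m n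
  sesq_right : ∀ a m n, act a (D m) n
      = D (act a m n) + (if n = 0 then 0 else act a m (n-1))
  jacobi : ∀ a b v p q,
      act a (act b v q) p - act b (act a v p) q
        = ∑ j ∈ Finset.range (p+1), (((q+j).choose j : F)) • act (L.br a b (p-j)) v (q+j)

variable {F}
variable {A M : Type*} [AddCommGroup A] [Module F A] [AddCommGroup M] [Module F M]

/-- Torsion elements of the `F[∂]`-module `A`. -/
def IsTor (L : LCA F A) (x : A) : Prop :=
  ∃ p : Polynomial F, p ≠ 0 ∧ Polynomial.aeval L.D p x = 0

/-- `A` decomposes, as an `F[∂]`-module, into the direct sum of its torsion and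
a free complementary submodule `F[∂] ⊗ U`. -/
def Decomposes (L : LCA F A) : Prop :=
  ∃ U : Submodule F A, Function.Bijective
    (fun p : {x : A // IsTor L x} × (ℕ →₀ U) =>
      (p.1 : A) + p.2.sum (fun n u => (L.D ^ n) (u : A)))

variable {L : LCA F A}

/-- The condition for a coefficient family
`γ : A^{⊗ k} → F[λ₁,…,λ_k] ⊗ M` (recorded via the coefficients
`γ a ν` of `λ^ν`) to be a basic `k`-cochain: `F`-multilinearity, polynomiality,
sesquilinearity (A1) and skew-symmetry (A2). -/
structure IsGamma (R : LCAMod F L M) (k : ℕ)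
    (γ : (Fin k → A) → (Fin k → ℕ) → M) : Prop where
  map_add : ∀ (a : Fin k → A) (i : Fin k) (x y : A),
    γ (Function.update a i (x + y)) = γ (Function.update a i x) + γ (Function.update a i y)
  map_smul : ∀ (a : Fin k → A) (i : Fin k) (r : F) (x : A),
    γ (Function.update a i (r • x)) = r • γ (Function.update a i x)
  fin : ∀ a, (Function.support (γ a)).Finite
  sesq : ∀ (a : Fin k → A) (i : Fin k) (x : A) (ν : Fin k → ℕ),
    γ (Function.update a i (L.D x)) ν
      = (if ν i = 0 then 0 else - γ (Function.update a i x) (Function.update ν i (ν i - 1)))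
  skew : ∀ (a : Fin k → A) (ν : Fin k → ℕ) (σ : Equiv.Perm (Fin k)),
    γ (a ∘ σ) (ν ∘ σ) = ((Equiv.Perm.sign σ : ℤˣ) : ℤ) • γ a ν

/-- The action of `∂` on basic cochains: `(∂γ) = (∂^M + λ₁ + ⋯ + λ_k) ∘ γ`,
in terms of coefficients. -/
def GammaD (R : LCAMod F L M) {k : ℕ} (γ : (Fin k → A) → (Fin k → ℕ) → M) :
    (Fin k → A) → (Fin k → ℕ) → M :=
  fun a ν => R.D (γ a ν)
    + ∑ i : Fin k, (if ν i = 0 then 0 else γ a (Function.update ν i (ν i - 1)))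

/-- Substitution of the auxiliary variable `μ` by
`λ† = −λ₁ − ⋯ − λ_K − ∂^M` (with `∂^M` moved to the left) in a polynomial
`q` in `λ₁,…,λ_K, μ`, recorded through its coefficients `q ρ n` of `λ^ρ μ^n`.
The result is the coefficient of `λ^ν`. -/
noncomputable def substDag {K : ℕ} (DM : M →ₗ[F] M)
    (q : (Fin K → ℕ) → ℕ → M) (ν : Fin K → ℕ) : M :=
  ∑ ρ ∈ Finset.Iic ν, ∑ᶠ s : ℕ,
    (((-1 : F)^(wt (fun r => ν r - ρ r) + s)) * (mnom (fun r => ν r - ρ r) s : F)) •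
      ((DM ^ s) (q ρ (wt (fun r => ν r - ρ r) + s)))

/-- The condition for a coefficient family
`c : A^{⊗(k+1)} → F[λ₁,…,λ_k] ⊗ M` to be a `(k+1)`-`λ`-bracket
(an element of `C^{k+1}(A,M)`), i.e. conditions B1, B2, B3 of the paper,
written in terms of the coefficients `c a ν` of `λ^ν`. -/
structure IsCBr (R : LCAMod F L M) (k : ℕ)
    (c : (Fin (k+1) → A) → (Fin k → ℕ) → M) : Prop where
  map_add : ∀ (a : Fin (k+1) → A) (i : Fin (k+1)) (x y : A),
    c (Function.update a i (x + y)) = c (Function.update a i x) + c (Function.update a i y)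
  map_smul : ∀ (a : Fin (k+1) → A) (i : Fin (k+1)) (r : F) (x : A),
    c (Function.update a i (r • x)) = r • c (Function.update a i x)
  fin : ∀ a, (Function.support (c a)).Finite
  sesq₁ : ∀ (a : Fin (k+1) → A) (i : Fin k) (x : A) (ν : Fin k → ℕ),
    c (Function.update a i.castSucc (L.D x)) ν
      = (if ν i = 0 then 0
         else - c (Function.update a i.castSucc x) (Function.update ν i (ν i - 1)))
  sesq₂ : ∀ (a : Fin (k+1) → A) (x : A) (ν : Fin k → ℕ),
    c (Function.update a (Fin.last k) (L.D x)) ν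
      = R.D (c (Function.update a (Fin.last k) x) ν)
        + ∑ i : Fin k, (if ν i = 0 then 0
            else c (Function.update a (Fin.last k) x) (Function.update ν i (ν i - 1)))
  skew : ∀ (a : Fin (k+1) → A) (ν : Fin k → ℕ) (σ : Equiv.Perm (Fin (k+1))),
    c a ν = ((Equiv.Perm.sign σ : ℤˣ) : ℤ) • substDag R.D
      (fun ρ n =>
        if (Fin.snoc ρ n : Fin (k+1) → ℕ) (σ (Fin.last k)) = 0 then
          c (a ∘ σ) (fun i : Fin k => (Fin.snoc ρ n : Fin (k+1) → ℕ) (σ i.castSucc))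
        else 0) ν

/-- The subspace `C̄`: poly-`λ`-brackets vanishing whenever one of the arguments is
a torsion element of `A`. -/
def VanishOnTorsion (L : LCA F A) {k : ℕ}
    (c : (Fin (k+1) → A) → (Fin k → ℕ) → M) : Prop :=
  ∀ a ν, (∃ i, IsTor L (a i)) → c a ν = 0

/-- The differential `d : C⁰ = M/∂M → C¹`, `(d∫m)(a) = a_{−∂^M} m`. -/
noncomputable def dZero (R : LCAMod F L M) (m : M) :
    (Fin 1 → A) → (Fin 0 → ℕ) → M :=
  fun a _ => ∑ᶠ n, ((-1 : F)^n) • ((R.D ^ n) (R.act (a 0) m n))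

/-- The second term of the differential `d` of the complex of
poly-`λ`-brackets (the double sum over `i < j` in the paper's formula). -/
noncomputable def dPair (L : LCA F A) (R : LCAMod F L M) :
    ∀ {k : ℕ}, ((Fin (k+1) → A) → (Fin k → ℕ) → M) →
      (Fin (k+2) → A) → (Fin (k+1) → ℕ) → M
  | 0, _, _, _ => 0
  | (s+1), c, a, ν =>
    ∑ i : Fin (s+2), ∑ j : Fin (s+2),
      if i < j then
        ((-1 : F)^(s + i.1 + j.1 + 1)) •
          ∑ p ∈ Finset.range (ν i + 1),
            substDag R.D
              (fun ρ n =>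
                if ρ i = 0 ∧ ρ j = 0 then
                  c (Fin.snoc (Fin.snoc (rm2 i.1 j.1 (Fin.init a)) (a (Fin.last (s+2))))
                      (L.br (a i.castSucc) (a j.castSucc) p))
                    (Fin.snoc (rm2 i.1 j.1 ρ) n)
                else 0)
              (Function.update ν i (ν i - p))
      else 0

/-- The differential `d` on the complex `C^•(A,M)` of poly-`λ`-brackets,
written in terms of coefficients (formula (1.8) of the paper). Here `c` is a
`(k+1)`-`λ`-bracket and `dRaw c` is a `(k+2)`-`λ`-bracket. -/
noncomputable def dRaw (L : LCA F A) (R : LCAMod F L M) {k : ℕ}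
    (c : (Fin (k+1) → A) → (Fin k → ℕ) → M) :
    (Fin (k+2) → A) → (Fin (k+1) → ℕ) → M :=
  fun a ν =>
    (∑ i : Fin (k+1), ((-1 : F)^i.1) •
        R.act (a i.castSucc) (c (rm1 i.1 a) (rm1 i.1 ν)) (ν i))
    + dPair L R c a ν
    + ((-1 : F)^(k+1)) • substDag R.D
        (fun ρ n =>
          if ρ (Fin.last k) = 0 then
            R.act (a (Fin.last (k+1))) (c (Fin.init a) (Fin.init ρ)) n
          else 0) ν
    + ∑ i : Fin (k+1), ((-1 : F)^(i.1+1)) •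
        c (Fin.snoc (rm1 i.1 (Fin.init a)) (L.br (a i.castSucc) (a (Fin.last (k+1))) (ν i)))
          (rm1 i.1 ν)

/-- The second term of the differential `δ` of the basic complex
`Γ̃^•(A,M)` (the double sum over `i < j`). -/
noncomputable def deltaPair (L : LCA F A) (R : LCAMod F L M) :
    ∀ {k : ℕ}, ((Fin k → A) → (Fin k → ℕ) → M) →
      (Fin (k+1) → A) → (Fin (k+1) → ℕ) → M
  | 0, _, _, _ => 0
  | (s+1), γ, a, ν =>
    ∑ i : Fin (s+2), ∑ j : Fin (s+2),
      if i < j then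
        ((-1 : F)^(s + i.1 + j.1)) •
          ∑ p ∈ Finset.range (ν i + 1),
            ((((ν i - p) + ν j).choose (ν i - p) : F)) •
              γ (Fin.snoc (rm2 i.1 j.1 a) (L.br (a i) (a j) p))
                (Fin.snoc (rm2 i.1 j.1 ν) ((ν i - p) + ν j))
      else 0

/-- The differential `δ` of the basic Lie conformal algebra cohomology complex
`Γ̃^•(A,M)`, written in terms of coefficients of the `λ`-expansions. -/
noncomputable def deltaRaw (L : LCA F A) (R : LCAMod F L M) {k : ℕ}
    (γ : (Fin k → A) → (Fin k → ℕ) → M) :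
    (Fin (k+1) → A) → (Fin (k+1) → ℕ) → M :=
  fun a ν =>
    (∑ i : Fin (k+1), ((-1 : F)^i.1) •
        R.act (a i) (γ (rm1 i.1 a) (rm1 i.1 ν)) (ν i))
    + deltaPair L R γ a ν

/-- The map `ψ^{k+1} : Γ̃^{k+1}(A,M) → C^{k+1}(A,M)`,
`{a₁ λ₁ ⋯ a_k λ_k a_{k+1}}_{ψ(γ)} = γ_{λ₁,…,λ_k,λ†}(a₁,…,a_{k+1})`
where `λ† = −λ₁ − ⋯ − λ_k − ∂^M` (with `∂^M` moved to the left). -/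
noncomputable def psiRaw (R : LCAMod F L M) {k : ℕ}
    (γ : (Fin (k+1) → A) → (Fin (k+1) → ℕ) → M) :
    (Fin (k+1) → A) → (Fin k → ℕ) → M :=
  fun a ν => substDag R.D (fun ρ n => γ a (Fin.snoc ρ n)) ν

/-- The map `χ` on "polynomial duals": given
`φ : Hom(F[λ₁,…,λ_K], M)` (recorded through its values `φ ν` on monomials),
`chiMap DM φ` is `φ ∘ (substitution λ_{K+1} ↦ −λ₁ − ⋯ − λ_K + ∂^M)`,
with `∂^M` moved to the left. -/
noncomputable def chiMap {K : ℕ} (DM : M →ₗ[F] M) (φ : (Fin K → ℕ) → M) :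
    (Fin (K+1) → ℕ) → M :=
  fun ν =>
    ∑ m ∈ Finset.Iic (fun _ : Fin K => ν (Fin.last K)),
      if wt m ≤ ν (Fin.last K) then
        (((-1 : F)^(wt m)) * (mnom m (ν (Fin.last K) - wt m) : F)) •
          ((DM ^ (ν (Fin.last K) - wt m)) (φ (fun r => Fin.init ν r + m r)))
      else 0

section Product

variable (F) {N : Type*} [CommRing N] [Algebra F N]

/-- The exterior multiplication of basic cochains, in coefficient form. -/
noncomputable def wedge {h k : ℕ}
    (α : (Fin h → A) → (Fin h → ℕ) → N) (β : (Fin k → A) → (Fin k → ℕ) → N) :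
    (Fin (h+k) → A) → (Fin (h+k) → ℕ) → N :=
  fun a ν =>
    ((h.factorial * k.factorial : F))⁻¹ •
      ∑ σ : Equiv.Perm (Fin (h+k)),
        ((Equiv.Perm.sign σ : ℤˣ) : ℤ) •
          (α (fun i => a (σ (Fin.castAdd k i))) (fun i => ν (σ (Fin.castAdd k i))) *
           β (fun i => a (σ (Fin.natAdd h i))) (fun i => ν (σ (Fin.natAdd h i))))

/-- Contraction of a basic cochain by (a generator of) a basic `h`-chain
`b ⊗ φ ∈ A^{⊗h} ⊗ Hom(F[λ₁,…,λ_h], N)`. -/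
noncomputable def iotaG {h k : ℕ} (b : Fin h → A) (φ : (Fin h → ℕ) → N)
    (γ : (Fin (h + k) → A) → (Fin (h + k) → ℕ) → N) :
    (Fin k → A) → (Fin k → ℕ) → N :=
  fun a ν => ∑ᶠ ρ : Fin h → ℕ, φ ρ * γ (Fin.append b a) (Fin.append ρ ν)

/-- The action of `∂` on (generators of) the space of basic `h`-chains:
`∂(a ⊗ φ) = a ⊗ ((−λ₁^* − ⋯ − λ_h^* + ∂)φ)`. -/
def chainD (R : LCAMod F L N) {h : ℕ} (φ : (Fin h → ℕ) → N) : (Fin h → ℕ) → N :=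
  fun ρ => R.D (φ ρ) - ∑ i : Fin h, φ (Function.update ρ i (ρ i + 1))

/-- Contraction by a basic 1-chain `a₀ ⊗ m(x)`, where `m(x) = ∑ m_k x^k` is recorded
by its coefficient function `m : ℕ → N` (formula (3.23) of the paper, using the
pairing `⟨x^p, λ^q⟩ = q! δ_{p,q}`). -/
noncomputable def iota1 {k : ℕ} (a₀ : A) (m : ℕ → N)
    (γ : (Fin (k+1) → A) → (Fin (k+1) → ℕ) → N) : (Fin k → A) → (Fin k → ℕ) → N :=
  fun a ν => ∑ᶠ q : ℕ, (q.factorial : F) • (m q * γ (Fin.cons a₀ a) (Fin.cons q ν))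

/-- The Lie derivative `L_ξ = δ ∘ ι_ξ + ι_ξ ∘ δ` along a basic 1-chain. -/
noncomputable def lie1 (R : LCAMod F L N) {k : ℕ} (a₀ : A) (m : ℕ → N)
    (γ : (Fin (k+1) → A) → (Fin (k+1) → ℕ) → N) : (Fin (k+1) → A) → (Fin (k+1) → ℕ) → N :=
  deltaRaw L R (iota1 F a₀ m γ) + iota1 F a₀ m (deltaRaw L R γ)

end Product

end LCC

namespace LCCP

/-! ### Abstract Loday/Chevalley–Eilenberg complex on homogeneous symbols -/

structure Sys (S 𝓐 V : Type*) [CommRing S] [AddCommGroup 𝓐] [Module S 𝓐]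
    [AddCommGroup V] [Module S V] where
  D : 𝓐 →ₗ[S] 𝓐
  br : S → 𝓐 →ₗ[S] 𝓐 →ₗ[S] 𝓐
  ρ : S → 𝓐 →ₗ[S] V →ₗ[S] V
  br_D_left : ∀ Λ p q, br Λ (D p + Λ • p) q = 0
  br_D_right : ∀ Λ Γ p q, br Λ p (D q + Γ • q) = D (br Λ p q) + (Λ + Γ) • br Λ p q
  ρ_D : ∀ Λ p v, ρ Λ (D p + Λ • p) v = 0
  br_skew : ∀ Λ Γ p q, ∃ u, br Λ p q + br Γ q p = D u + (Λ + Γ) • u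
  br_jac : ∀ Λ Γ p q r,
    br Λ p (br Γ q r) - br Γ q (br Λ p r) = br (Λ + Γ) (br Λ p q) r
  ρ_jac : ∀ Λ Γ p q v,
    ρ Λ p (ρ Γ q v) - ρ Γ q (ρ Λ p v) = ρ (Λ + Γ) (br Λ p q) v

section abstract_part

variable {S 𝓐 V : Type*} [CommRing S] [AddCommGroup 𝓐] [Module S 𝓐]
    [AddCommGroup V] [Module S V] (Y : Sys S 𝓐 V)

/-- bracket of symbols -/
def Sys.brk (x y : 𝓐 × S) : 𝓐 × S := (Y.br x.2 x.1 y.1, x.2 + y.2)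

/-- action of symbols -/
def Sys.act (x : 𝓐 × S) : V →ₗ[S] V := Y.ρ x.2 x.1

/-- Lie derivative -/
def Sys.Lie {k : ℕ} (x : 𝓐 × S) (E : (Fin k → 𝓐 × S) → V) : (Fin k → 𝓐 × S) → V :=
  fun y => Y.act x (E y) - ∑ j, E (Function.update y j (Y.brk x (y j)))

/-- contraction -/
def iot {G V : Type*} {k : ℕ} (x : G) (E : (Fin (k+1) → G) → V) : (Fin k → G) → V :=
  fun y => E (Fin.cons x y)

/-- the differential, by recursion through Cartan's formula -/
def Sys.dd : ∀ {k : ℕ}, ((Fin k → 𝓐 × S) → V) → (Fin (k+1) → 𝓐 × S) → V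
  | 0, E, x => Y.Lie (x 0) E (Fin.tail x)
  | (_+1), E, x => Y.Lie (x 0) E (Fin.tail x) - Sys.dd (iot (x 0) E) (Fin.tail x)

/-- a function of one slot which is linear and kills `D + Λ` -/
def Sys.Slot (Λ : S) (h : 𝓐 → V) : Prop :=
  ∃ φ : 𝓐 →ₗ[S] V, (∀ p, φ p = h p) ∧ ∀ p, φ (Y.D p + Λ • p) = 0

def Sys.Nice {k : ℕ} (E : (Fin k → 𝓐 × S) → V) : Prop :=
  ∀ y j Λ, Y.Slot Λ (fun p => E (Function.update y j (p, Λ)))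

variable {Y}

lemma slot_zero (Λ : S) : Y.Slot Λ (fun _ => (0 : V)) := ⟨0, by simp, by simp⟩

lemma Sys.Slot.sub {Λ : S} {h g : 𝓐 → V} (hh : Y.Slot Λ h) (hg : Y.Slot Λ g) :
    Y.Slot Λ (fun p => h p - g p) := by
  obtain ⟨φ, h1, h2⟩ := hh
  obtain ⟨ψ, g1, g2⟩ := hg
  exact ⟨φ - ψ, fun p => by simp [h1, g1], fun p => by
    rw [LinearMap.sub_apply, h2, g2, sub_zero]⟩

lemma slot_sum {ι : Type*} (s : Finset ι) {Λ : S} {h : ι → 𝓐 → V}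
    (hh : ∀ i ∈ s, Y.Slot Λ (h i)) : Y.Slot Λ (fun p => ∑ i ∈ s, h i p) := by
  classical
  induction s using Finset.induction_on with
  | empty => simpa using slot_zero Λ
  | insert a s ha ih =>
    have h1 := hh a (Finset.mem_insert_self _ _)
    have h2 := ih (fun i hi => hh i (Finset.mem_insert_of_mem hi))
    have h3 := h1.sub ((slot_zero Λ).sub h2)
    simpa [Finset.sum_insert ha, sub_neg_eq_add] using h3

lemma Sys.Slot.act {Λ : S} {h : 𝓐 → V} (hh : Y.Slot Λ h) (x : 𝓐 × S) :
    Y.Slot Λ (fun p => Y.act x (h p)) := by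
  obtain ⟨φ, h1, h2⟩ := hh
  exact ⟨Y.act x ∘ₗ φ, fun p => by simp [h1], fun p => by
    rw [LinearMap.comp_apply, h2, map_zero]⟩

lemma slot_act (Λ : S) (v : V) : Y.Slot Λ (fun p => Y.act (p, Λ) v) :=
  ⟨(Y.ρ Λ).flip v, fun p => by simp [Sys.act], fun p => Y.ρ_D Λ p v⟩

lemma Sys.Slot.brk_right {Λ : S} {h : 𝓐 → V} (x : 𝓐 × S) (hh : Y.Slot (x.2 + Λ) h) :
    Y.Slot Λ (fun p => h (Y.brk x (p, Λ)).1) := by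
  obtain ⟨φ, h1, h2⟩ := hh
  exact ⟨φ ∘ₗ Y.br x.2 x.1, fun p => by simp [h1, Sys.brk], fun p => by
    rw [LinearMap.comp_apply, Y.br_D_right, h2]⟩

lemma Sys.Slot.brk_left {Λ : S} {h : 𝓐 → V} (x : 𝓐 × S) (hh : Y.Slot (Λ + x.2) h) :
    Y.Slot Λ (fun p => h (Y.brk (p, Λ) x).1) := by
  obtain ⟨φ, h1, h2⟩ := hh
  exact ⟨φ ∘ₗ (Y.br Λ).flip x.1, fun p => by simp [h1, Sys.brk], fun p => by
    rw [LinearMap.comp_apply, LinearMap.flip_apply, Y.br_D_left, map_zero]⟩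

lemma Sys.Nice.iot {k : ℕ} {E : (Fin (k+1) → 𝓐 × S) → V} (hE : Y.Nice E) (x : 𝓐 × S) :
    Y.Nice (iot x E) := by
  intro y j Λ
  have := hE (Fin.cons x y) j.succ Λ
  simpa [LCCP.iot, Fin.cons_update] using this

lemma Sys.Nice.Lie {k : ℕ} {E : (Fin k → 𝓐 × S) → V} (hE : Y.Nice E) (x : 𝓐 × S) :
    Y.Nice (Y.Lie x E) := by
  intro y j Λ
  refine ((hE y j Λ).act x).sub (slot_sum _ fun i _ => ?_)
  by_cases hij : i = j
  · subst hij
    have := (hE y i (x.2 + Λ)).brk_right x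
    simpa [Sys.brk] using this
  · have := hE (Function.update y i (Y.brk x (y i))) j Λ
    simpa [Function.update_of_ne hij, Function.update_comm hij] using this

lemma Lie_slot {k : ℕ} {E : (Fin k → 𝓐 × S) → V} (hE : Y.Nice E) (y : Fin k → 𝓐 × S) (Λ : S) :
    Y.Slot Λ (fun p => Y.Lie (p, Λ) E y) := by
  refine (slot_act Λ _).sub (slot_sum _ fun i _ => ?_)
  exact (hE y i (Λ + (y i).2)).brk_left (y i)

lemma dd_cons {k : ℕ} (E : (Fin (k+1) → 𝓐 × S) → V) (x : 𝓐 × S) (y : Fin (k+1) → 𝓐 × S) :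
    Y.dd E (Fin.cons x y) = Y.Lie x E y - Y.dd (iot x E) y := by
  simp [Sys.dd]

lemma dd_cons_zero (E : (Fin 0 → 𝓐 × S) → V) (x : 𝓐 × S) (y : Fin 0 → 𝓐 × S) :
    Y.dd E (Fin.cons x y) = Y.Lie x E y := by
  simp [Sys.dd]

lemma slot_iff {Λ : S} {h : 𝓐 → V} : Y.Slot Λ h ↔
    (∀ p q, h (p + q) = h p + h q) ∧ (∀ (s : S) p, h (s • p) = s • h p) ∧
    ∀ p, h (Y.D p + Λ • p) = 0 := by
  constructor
  · rintro ⟨φ, h1, h2⟩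
    refine ⟨fun p q => ?_, fun s p => ?_, fun p => ?_⟩
    · rw [← h1, map_add, h1, h1]
    · rw [← h1, map_smul, h1]
    · rw [← h1, h2]
  · rintro ⟨h1, h2, h3⟩
    exact ⟨⟨⟨h, h1⟩, h2⟩, fun p => rfl, h3⟩

/-- slot property for `dd` of a family of cochains depending nicely on a parameter -/
lemma dd_slot {k : ℕ} (E : 𝓐 → (Fin k → 𝓐 × S) → V) (Λ : S)
    (hE : ∀ y, Y.Slot Λ (fun p => E p y)) (y : Fin (k+1) → 𝓐 × S) :
    Y.Slot Λ (fun p => Y.dd (E p) y) := by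
  induction k with
  | zero =>
    refine ((hE _).act _).sub (slot_sum _ fun i _ => i.elim0)
  | succ k ih =>
    refine (((hE _).act _).sub (slot_sum _ fun i _ => hE _)).sub ?_
    exact ih (fun p => iot (y 0) (E p)) (fun z => hE _) _

lemma Sys.Nice.dd {k : ℕ} {E : (Fin k → 𝓐 × S) → V} (hE : Y.Nice E) : Y.Nice (Y.dd E) := by
  induction k with
  | zero =>
    intro y j Λ
    have hj : j = 0 := Fin.ext (by omega)
    subst hj
    have := Lie_slot hE (Fin.tail y) Λ
    simpa [Sys.dd] using this
  | succ k ih =>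
    intro y j Λ
    refine Fin.cases ?_ (fun j => ?_) j
    · have := (Lie_slot hE (Fin.tail y) Λ).sub (dd_slot (fun p => LCCP.iot (p, Λ) E) Λ
        (fun z => by simpa [LCCP.iot] using hE (Fin.cons 0 z) 0 Λ) (Fin.tail y))
      simpa [Sys.dd] using this
    · have := (hE.Lie (y 0) (Fin.tail y) j Λ).sub (ih (hE.iot (y 0)) (Fin.tail y) j Λ)
      have e : ∀ p, Fin.tail (Function.update y j.succ (p, Λ))
        = Function.update (Fin.tail y) j (p, Λ) := fun p => by
        rw [Fin.tail_update_succ]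
      have e0 : ∀ p, Function.update y j.succ (p, Λ) 0 = y 0 := fun p => by
        rw [Function.update_of_ne (Fin.succ_ne_zero j).symm]
      simpa only [Sys.dd, e, e0] using this

lemma dd_sub {k : ℕ} (E E' : (Fin k → 𝓐 × S) → V) (x) :
    Y.dd (fun y => E y - E' y) x = Y.dd E x - Y.dd E' x := by
  induction k with
  | zero => simp [Sys.dd, Sys.Lie]
  | succ k ih =>
    simp only [Sys.dd, Sys.Lie, map_sub, Finset.sum_sub_distrib]
    have := ih (iot (x 0) E) (iot (x 0) E') (Fin.tail x)
    have e : iot (x 0) (fun y => E y - E' y) = fun y => iot (x 0) E y - iot (x 0) E' y := rfl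
    rw [e, this]; abel

lemma dd_zero {k : ℕ} (x) : Y.dd (fun _ : Fin k → 𝓐 × S => (0 : V)) x = 0 := by
  have := dd_sub (Y := Y) (fun _ : Fin k → 𝓐 × S => (0 : V)) (fun _ => 0) x
  simpa using this

lemma dd_neg {k : ℕ} (E : (Fin k → 𝓐 × S) → V) (x) :
    Y.dd (fun y => - E y) x = - Y.dd E x := by
  have := dd_sub (Y := Y) (fun _ => 0) E x
  simpa [dd_zero] using this

/-- `[L_x, ι_y] = ι_{[x,y]}` -/
lemma Lie_iot {k : ℕ} (E : (Fin (k+1) → 𝓐 × S) → V) (x y : 𝓐 × S) (z : Fin k → 𝓐 × S) :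
    Y.Lie x E (Fin.cons y z) = Y.Lie x (iot y E) z - iot (Y.brk x y) E z := by
  simp only [Sys.Lie, iot, Fin.sum_univ_succ, Fin.cons_zero, Fin.cons_succ, Fin.update_cons_zero,
    Fin.cons_update]
  abel

lemma Lie_sub {k : ℕ} (E E' : (Fin k → 𝓐 × S) → V) (x : 𝓐 × S) (z) :
    Y.Lie x (fun y => E y - E' y) z = Y.Lie x E z - Y.Lie x E' z := by
  simp only [Sys.Lie, map_sub, Finset.sum_sub_distrib]; abel

lemma act_brk (x y : 𝓐 × S) (v : V) :
    Y.act x (Y.act y v) - Y.act y (Y.act x v) = Y.act (Y.brk x y) v :=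
  Y.ρ_jac _ _ _ _ _

lemma Sys.Nice.leib {k : ℕ} {E : (Fin k → 𝓐 × S) → V} (hE : Y.Nice E) (a j) (x y z : 𝓐 × S) :
    E (Function.update a j (Y.brk x (Y.brk y z))) - E (Function.update a j (Y.brk y (Y.brk x z)))
      = E (Function.update a j (Y.brk (Y.brk x y) z)) := by
  obtain ⟨φ, h1, -⟩ := hE a j (x.2 + y.2 + z.2)
  dsimp only at h1
  have e1 : Y.brk x (Y.brk y z) = (Y.br x.2 x.1 (Y.br y.2 y.1 z.1), x.2 + y.2 + z.2) := by
    simp [Sys.brk, add_assoc]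
  have e2 : Y.brk y (Y.brk x z) = (Y.br y.2 y.1 (Y.br x.2 x.1 z.1), x.2 + y.2 + z.2) := by
    simp [Sys.brk]; ring
  have e3 : Y.brk (Y.brk x y) z =
      (Y.br (x.2 + y.2) (Y.br x.2 x.1 y.1) z.1, x.2 + y.2 + z.2) := rfl
  rw [e1, e2, e3, ← h1, ← h1, ← h1, ← map_sub, Y.br_jac]

lemma Sys.Nice.brk_skew {k : ℕ} {E : (Fin k → 𝓐 × S) → V} (hE : Y.Nice E) (a j) (x y : 𝓐 × S) :
    E (Function.update a j (Y.brk x y)) = - E (Function.update a j (Y.brk y x)) := by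
  obtain ⟨φ, h1, h2⟩ := hE a j (x.2 + y.2)
  dsimp only at h1
  obtain ⟨u, hu⟩ := Y.br_skew x.2 y.2 x.1 y.1
  have e1 : Y.brk x y = (Y.br x.2 x.1 y.1, x.2 + y.2) := rfl
  have e2 : Y.brk y x = (Y.br y.2 y.1 x.1, x.2 + y.2) := by simp [Sys.brk, add_comm]
  rw [e1, e2, ← h1, ← h1, eq_neg_iff_add_eq_zero, ← map_add, hu, h2]

lemma cons_eq_update {G : Type*} {k : ℕ} (x y : G) (z : Fin k → G) :
    (Fin.cons x z : Fin (k+1) → G) = Function.update (Fin.cons y z) 0 x := by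
  simp

/-- `[L_x, L_y] = L_{[x,y]}` -/
lemma Lie_Lie {k : ℕ} {E : (Fin k → 𝓐 × S) → V} (hE : Y.Nice E) (x y : 𝓐 × S) (z) :
    Y.Lie x (Y.Lie y E) z - Y.Lie y (Y.Lie x E) z = Y.Lie (Y.brk x y) E z := by
  induction k with
  | zero => simp [Sys.Lie, act_brk]
  | succ k ih =>
    induction z using Fin.consCases with
    | _ w z =>
    have H : ∀ x y : 𝓐 × S, iot w (Y.Lie y E) =
        fun z => Y.Lie y (iot w E) z - iot (Y.brk y w) E z := fun x y => by
      funext z; exact Lie_iot E y w z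
    simp only [Lie_iot, H x y, H y x, Lie_sub]
    have h1 := ih (hE.iot w) z
    have h2 := hE.leib (Fin.cons w z) 0 x y w
    simp only [Fin.update_cons_zero] at h2
    have e : ∀ u v, iot u (Y.Lie v E) z = Y.Lie v (iot u E) z - iot (Y.brk v u) E z :=
      fun u v => Lie_iot E v u z
    rw [e, e, ← h1]
    simp only [iot] at *
    rw [← h2]
    abel

lemma Lie_dd {k : ℕ} {E : (Fin k → 𝓐 × S) → V} (hE : Y.Nice E) (x : 𝓐 × S) (z) :
    Y.Lie x (Y.dd E) z = Y.dd (Y.Lie x E) z := by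
  induction k with
  | zero =>
    induction z using Fin.consCases with
    | _ w z =>
    rw [Lie_iot, dd_cons_zero]
    have e : iot w (Y.dd E) = Y.Lie w E := by funext z; exact dd_cons_zero E w z
    rw [e, iot, dd_cons_zero, ← Lie_Lie hE]; abel
  | succ k ih =>
    induction z using Fin.consCases with
    | _ w z =>
    have e : iot w (Y.dd E) = fun z => Y.Lie w E z - Y.dd (iot w E) z := by
      funext z; exact dd_cons E w z
    have e2 : iot w (Y.Lie x E) = fun z => Y.Lie x (iot w E) z - iot (Y.brk x w) E z := by
      funext z; exact Lie_iot E x w z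
    rw [Lie_iot, dd_cons, e, e2, Lie_sub, dd_sub, ih (hE.iot w), iot, dd_cons, ← Lie_Lie hE]
    abel

theorem dd_dd {k : ℕ} {E : (Fin k → 𝓐 × S) → V} (hE : Y.Nice E) (z) :
    Y.dd (Y.dd E) z = 0 := by
  induction k with
  | zero =>
    induction z using Fin.consCases with
    | _ w z =>
    have e : iot w (Y.dd E) = Y.Lie w E := by funext z; exact dd_cons_zero E w z
    rw [dd_cons, Lie_dd hE, e, sub_self]
  | succ k ih =>
    induction z using Fin.consCases with
    | _ w z =>
    have e : iot w (Y.dd E) = fun z => Y.Lie w E z - Y.dd (iot w E) z := by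
      funext z; exact dd_cons E w z
    rw [dd_cons, Lie_dd hE, e, dd_sub, ih (hE.iot w)]
    abel

/-! skew symmetry -/

def Skew {G V : Type*} [AddCommGroup V] {k : ℕ} (E : (Fin k → G) → V) : Prop :=
  ∀ (x : Fin k → G) (σ : Equiv.Perm (Fin k)),
    E (x ∘ σ) = ((Equiv.Perm.sign σ : ℤˣ) : ℤ) • E x

lemma skew_of_adj {G V : Type*} [AddCommGroup V] {k : ℕ} {E : (Fin (k+1) → G) → V}
    (h : ∀ (i : Fin k) x, E (x ∘ Equiv.swap i.castSucc i.succ) = - E x) : Skew E := by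
  intro x σ
  have hσ : σ ∈ Submonoid.closure
      (Set.range fun i : Fin k => Equiv.swap i.castSucc i.succ) := by
    rw [Equiv.Perm.mclosure_swap_castSucc_succ]; trivial
  induction hσ using Submonoid.closure_induction generalizing x with
  | mem σ hσ =>
    obtain ⟨i, rfl⟩ := hσ
    rw [h, Equiv.Perm.sign_swap (by simp [Fin.ext_iff])]
    simp
  | one => simp
  | mul σ τ _ _ h1 h2 =>
    have : x ∘ (σ * τ : Equiv.Perm _) = (x ∘ σ) ∘ τ := rfl
    rw [this, h2, h1, Equiv.Perm.sign_mul]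
    rw [smul_smul, Units.val_mul, mul_comm]

lemma Skew.adj {G V : Type*} [AddCommGroup V] {k : ℕ} {E : (Fin (k+1) → G) → V}
    (h : Skew E) (i : Fin k) (x) : E (x ∘ Equiv.swap i.castSucc i.succ) = - E x := by
  rw [h, Equiv.Perm.sign_swap (by simp [Fin.ext_iff])]
  simp

lemma cons_comp_swap_succ {G : Type*} {k : ℕ} (x : G) (y : Fin (k+1) → G) (i : Fin k) :
    (Fin.cons x (y ∘ Equiv.swap i.castSucc i.succ) : Fin (k+2) → G) =
      (Fin.cons x y : Fin (k+2) → G) ∘ Equiv.swap i.succ.castSucc i.succ.succ := by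
  funext j
  refine Fin.cases ?_ (fun j => ?_) j
  · rw [Function.comp_apply, Equiv.swap_apply_of_ne_of_ne]
    · rfl
    · rw [Fin.castSucc_succ]; exact (Fin.succ_ne_zero _).symm
    · exact (Fin.succ_ne_zero _).symm
  · rw [Function.comp_apply, Fin.cons_succ, Fin.castSucc_succ, Function.comp_apply]
    rw [← (Fin.succ_injective _).map_swap (f := Fin.succ), Fin.cons_succ]

lemma Skew.iot {G V : Type*} [AddCommGroup V] {k : ℕ} {E : (Fin (k+1) → G) → V}
    (h : Skew E) (x : G) : Skew (iot x E) := by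
  cases k with
  | zero =>
    intro y σ
    have : σ = 1 := Subsingleton.elim _ _
    subst this; simp
  | succ k =>
    refine skew_of_adj fun i y => ?_
    rw [LCCP.iot, cons_comp_swap_succ, h.adj, LCCP.iot]

lemma Skew.Lie {k : ℕ} {E : (Fin k → 𝓐 × S) → V} (h : Skew E) (x) : Skew (Y.Lie x E) := by
  intro y σ
  simp only [Sys.Lie]
  rw [h, smul_sub, map_zsmul, Finset.smul_sum]
  congr 1
  refine Fintype.sum_equiv σ _ _ fun j => ?_
  rw [← h]
  congr 1
  funext i
  simp [Function.update_apply, EmbeddingLike.apply_eq_iff_eq]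

lemma cons_cons_swap {G : Type*} {k : ℕ} (x y : G) (z : Fin k → G) :
    (Fin.cons x (Fin.cons y z) : Fin (k+2) → G) ∘ Equiv.swap (Fin.castSucc 0) (Fin.succ 0)
      = Fin.cons y (Fin.cons x z) := by
  funext j
  refine Fin.cases ?_ (fun j => Fin.cases ?_ (fun j => ?_) j) j
  · simp [Equiv.swap_apply_left]
  · simp [Equiv.swap_apply_right]
  · rw [Function.comp_apply, Equiv.swap_apply_of_ne_of_ne]
    · rfl
    · simp [Fin.ext_iff]
    · simp [Fin.ext_iff]

lemma Skew.dd {k : ℕ} {E : (Fin k → 𝓐 × S) → V} (hE : Y.Nice E) (h : Skew E) :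
    Skew (Y.dd E) := by
  induction k with
  | zero => exact skew_of_adj fun i => i.elim0
  | succ k ih =>
    refine skew_of_adj fun i y => ?_
    induction y using Fin.consCases with
    | _ w y =>
    refine Fin.cases ?_ (fun i => ?_) i
    · induction y using Fin.consCases with
      | _ v y =>
      rw [cons_cons_swap, dd_cons, dd_cons, Lie_iot, Lie_iot]
      have h1 := hE.brk_skew (Fin.cons v y) 0 v w
      simp only [Fin.update_cons_zero] at h1
      simp only [LCCP.iot] at *
      rw [h1]
      cases k with
      | zero =>
        rw [Subsingleton.elim y (fun i => i.elim0)]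
        have e1 := dd_cons_zero (Y := Y) (LCCP.iot w E) v (fun i => i.elim0)
        have e2 := dd_cons_zero (Y := Y) (LCCP.iot v E) w (fun i => i.elim0)
        rw [e1, e2]; abel
      | succ k =>
        rw [dd_cons, dd_cons]
        have e : LCCP.iot w (LCCP.iot v E) = fun y => - LCCP.iot v (LCCP.iot w E) y := by
          funext y
          simp only [LCCP.iot]
          have := h.adj 0 (Fin.cons w (Fin.cons v y))
          rw [cons_cons_swap] at this
          rw [this]
        simp only [LCCP.iot] at *
        rw [e, dd_neg]; abel
    · cases k with
      | zero => exact i.elim0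
      | succ k =>
        rw [← cons_comp_swap_succ, dd_cons, dd_cons, (h.Lie w).adj,
          (ih (hE.iot w) (h.iot w)).adj]
        abel

lemma rm1_eq {α : Type*} {k : ℕ} (i : Fin (k+1)) (a : Fin (k+1) → α) :
    LCC.rm1 i.1 a = i.removeNth a := by
  funext r
  simp only [LCC.rm1, Fin.removeNth, LCC.skip1, Fin.succAbove]
  congr 1
  apply Fin.ext
  simp only [Fin.lt_def, Fin.val_castSucc]
  split_ifs <;> rfl

lemma rm1_zero_cons {α : Type*} {k : ℕ} (x : α) (y : Fin k → α) :
    LCC.rm1 0 (Fin.cons x y : Fin (k+1) → α) = y := by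
  funext r
  simp [LCC.rm1, LCC.skip1]
  exact Fin.cons_succ (α := fun _ => α) x y r

lemma rm1_succ_cons {α : Type*} {k : ℕ} (i : ℕ) (x : α) (y : Fin (k+1) → α) :
    LCC.rm1 (i+1) (Fin.cons x y : Fin (k+2) → α) = Fin.cons x (LCC.rm1 i y) := by
  funext r
  refine Fin.cases ?_ (fun r => ?_) r
  · simp [LCC.rm1, LCC.skip1]
  · simp only [LCC.rm1, LCC.skip1, Fin.cons_succ, Fin.val_succ]
    have : (⟨if r.1 + 1 < i + 1 then r.1 + 1 else r.1 + 1 + 1, by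
        split_ifs <;> omega⟩ : Fin (k+2)) =
        Fin.succ ⟨if r.1 < i then r.1 else r.1 + 1, by split_ifs <;> omega⟩ := by
      apply Fin.ext
      simp only [Fin.val_succ]
      split_ifs <;> omega
    rw [this, Fin.cons_succ]

lemma rm2_eq {α : Type*} {k : ℕ} {i j : ℕ} (h : i < j) (a : Fin (k+2) → α) :
    LCC.rm2 i j a = LCC.rm1 i (LCC.rm1 j a) := by
  funext r
  simp only [LCC.rm1, LCC.rm2, LCC.skip1, LCC.skip2]
  congr 1
  apply Fin.ext
  simp only
  split_ifs <;> omega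

lemma insertNth_swap {G : Type*} {k : ℕ} (j : Fin k) (z : G) (w : Fin k → G) :
    (Fin.insertNth j.castSucc z w : Fin (k+1) → G) ∘ Equiv.swap j.castSucc j.succ =
      Fin.insertNth j.succ z w := by
  rw [Fin.eq_insertNth_iff]
  constructor
  · simp
  · funext i
    simp only [Fin.removeNth, Function.comp_apply]
    by_cases hij : i = j
    · subst hij
      rw [Fin.succAbove_succ_self, Equiv.swap_apply_left]
      have : i.succ = i.castSucc.succAbove i := by simp
      rw [this, Fin.insertNth_apply_succAbove]
    · have e : j.succ.succAbove i = j.castSucc.succAbove i := by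
        rcases lt_or_gt_of_ne hij with h | h
        · rw [Fin.succAbove_of_castSucc_lt, Fin.succAbove_of_castSucc_lt]
          · simpa using h
          · rw [Fin.lt_def] at *; simp; omega
        · rw [Fin.succAbove_of_le_castSucc, Fin.succAbove_of_le_castSucc]
          · rw [Fin.le_def]; rw [Fin.lt_def] at h; simp; omega
          · rw [Fin.le_def]; rw [Fin.lt_def] at h; simp; omega
      rw [e, Equiv.swap_apply_of_ne_of_ne]
      · simp
      · exact Fin.succAbove_ne _ _
      · rw [← e]; exact Fin.succAbove_ne _ _

lemma Skew.insertNth {G : Type*} {k : ℕ} {E : (Fin (k+1) → G) → V} (h : Skew E)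
    (j : Fin (k+1)) (z : G) (w : Fin k → G) :
    E (Fin.snoc w z) = ((-1 : S) ^ (k + j.1)) • E (Fin.insertNth j z w) := by
  induction j using Fin.reverseInduction with
  | last =>
    rw [Fin.insertNth_last']
    simp [← two_mul]
  | cast j ih =>
    rw [ih, ← insertNth_swap, h.adj]
    simp only [Fin.val_succ, Fin.val_castSucc, ← add_assoc, pow_succ]
    simp

lemma Skew.snoc_rm1 {G : Type*} {k : ℕ} {E : (Fin (k+1) → G) → V} (h : Skew E)
    (j : Fin (k+1)) (z : G) (y : Fin (k+1) → G) :
    E (Fin.snoc (LCC.rm1 j.1 y) z) = ((-1 : S) ^ (k + j.1)) • E (Function.update y j z) := by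
  rw [rm1_eq, h.insertNth (S := S) j, Fin.insertNth_removeNth]

/-- the bracket part of the differential -/
def Sys.pr (Y : Sys S 𝓐 V) {k : ℕ} (E : (Fin (k+1) → 𝓐 × S) → V) (x : Fin (k+2) → 𝓐 × S) : V :=
  ∑ i : Fin (k+2), ∑ j : Fin (k+2), if i < j then
    ((-1 : S) ^ (k + i.1 + j.1)) •
      E (Fin.snoc (LCC.rm2 i.1 j.1 x) (Y.brk (x i) (x j))) else 0

lemma rm2_zero_succ {G : Type*} {k : ℕ} (j : ℕ) (x : G) (y : Fin (k+1) → G) :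
    LCC.rm2 0 (j+1) (Fin.cons x y : Fin (k+2) → G) = LCC.rm1 j y := by
  rw [rm2_eq (Nat.succ_pos _), rm1_succ_cons, rm1_zero_cons]

lemma rm2_succ_succ {G : Type*} {k : ℕ} {i j : ℕ} (h : i < j) (x : G) (y : Fin (k+2) → G) :
    LCC.rm2 (i+1) (j+1) (Fin.cons x y : Fin (k+3) → G) = Fin.cons x (LCC.rm2 i j y) := by
  rw [rm2_eq (by omega), rm1_succ_cons, rm1_succ_cons, rm2_eq h]

lemma pr_head {k : ℕ} {E : (Fin (k+1) → 𝓐 × S) → V} (h : Skew E) (x : 𝓐 × S)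
    (y : Fin (k+1) → 𝓐 × S) :
    ∑ j : Fin (k+1), ((-1 : S) ^ (k + 0 + (j.1 + 1))) •
      E (Fin.snoc (LCC.rm2 0 (j.1+1) (Fin.cons x y : Fin (k+2) → 𝓐 × S)) (Y.brk x (y j)))
    = - ∑ j, E (Function.update y j (Y.brk x (y j))) := by
  rw [← Finset.sum_neg_distrib]
  refine Finset.sum_congr rfl fun j _ => ?_
  rw [rm2_zero_succ, h.snoc_rm1 (S := S), smul_smul, ← pow_add]
  have : k + 0 + (j.1 + 1) + (k + j.1) = 2 * (k + j.1) + 1 := by ring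
  rw [this, pow_succ, pow_mul]
  simp

lemma pr_cons {k : ℕ} {E : (Fin (k+2) → 𝓐 × S) → V} (h : Skew E) (x : 𝓐 × S)
    (y : Fin (k+2) → 𝓐 × S) :
    Y.pr E (Fin.cons x y) = - (∑ j, E (Function.update y j (Y.brk x (y j)))) - Y.pr (iot x E) y := by
  rw [← pr_head h]
  unfold Sys.pr
  rw [Fin.sum_univ_succ]
  rw [sub_eq_add_neg]
  congr 1
  · rw [Fin.sum_univ_succ]
    simp
  · rw [← Finset.sum_neg_distrib]
    refine Finset.sum_congr rfl fun i _ => ?_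
    rw [Fin.sum_univ_succ]
    simp only [Fin.not_lt_zero, if_false, zero_add]
    rw [← Finset.sum_neg_distrib]
    refine Finset.sum_congr rfl fun j _ => ?_
    by_cases hij : i < j
    · rw [if_pos hij, if_pos (by simpa using hij)]
      simp only [Fin.val_succ, Fin.cons_succ]
      rw [rm2_succ_succ hij, iot]
      rw [← Fin.cons_snoc_eq_snoc_cons]
      have : k + 1 + (i.1 + 1) + (j.1 + 1) = (k + i.1 + j.1) + 2 + 1 := by ring
      rw [this, pow_succ, pow_add]
      simp
    · rw [if_neg hij, if_neg (by simpa using hij), neg_zero]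

theorem dd_explicit {k : ℕ} {E : (Fin (k+1) → 𝓐 × S) → V} (h : Skew E)
    (x : Fin (k+2) → 𝓐 × S) :
    Y.dd E x = ∑ i : Fin (k+2), ((-1 : S) ^ i.1) • Y.act (x i) (E (LCC.rm1 i.1 x)) + Y.pr E x := by
  induction k with
  | zero =>
    induction x using Fin.consCases with
    | _ x y =>
    rw [dd_cons, Sys.Lie]
    have h2 : Y.pr E (Fin.cons x y) = - (∑ j, E (Function.update y j (Y.brk x (y j)))) := by
      rw [← pr_head h]
      unfold Sys.pr
      rw [Fin.sum_univ_succ, Fin.sum_univ_succ]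
      simp
    rw [h2, Fin.sum_univ_succ]
    have h3 : Y.dd (iot x E) y = Y.act (y 0) (E (Fin.cons x (Fin.tail y))) := by
      rw [← Fin.cons_self_tail y, dd_cons_zero]
      simp [Sys.Lie, iot]
    have h4 : LCC.rm1 (0+1) (Fin.cons x y : Fin 2 → 𝓐 × S) = Fin.cons x (Fin.tail y) := by
      rw [rm1_succ_cons]
      congr 1
    simp [rm1_zero_cons, h3] at *
    rw [h4]; abel
  | succ k ih =>
    induction x using Fin.consCases with
    | _ x y =>
    rw [dd_cons, Sys.Lie, ih (h.iot x), pr_cons h, Fin.sum_univ_succ (n := k + 2)]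
    have : ∑ i : Fin (k+2), ((-1 : S) ^ i.succ.1) •
        Y.act ((Fin.cons x y : Fin (k+3) → 𝓐 × S) i.succ)
          (E (LCC.rm1 i.succ.1 (Fin.cons x y : Fin (k+3) → 𝓐 × S)))
        = - ∑ i : Fin (k+2), ((-1 : S) ^ i.1) • Y.act (y i) (iot x E (LCC.rm1 i.1 y)) := by
      rw [← Finset.sum_neg_distrib]
      refine Finset.sum_congr rfl fun i _ => ?_
      rw [Fin.val_succ, rm1_succ_cons, Fin.cons_succ, iot, pow_succ]
      simp
    rw [this]
    simp [rm1_zero_cons]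
    abel

end abstract_part
end LCCP

namespace LCCP
open scoped TensorProduct

section base
variable {F : Type*} [Field F] {S : Type*} [CommRing S] [Algebra F S]
variable {A N : Type*} [AddCommGroup A] [Module F A] [AddCommGroup N] [Module F N]

/-- the submodule `(D + Γ) X` -/
def Rg {X : Type*} [AddCommGroup X] [Module S X] (D : X →ₗ[S] X) (Γ : S) : Submodule S X :=
  LinearMap.range (D + Γ • LinearMap.id)

lemma mem_Rg {X : Type*} [AddCommGroup X] [Module S X] {D : X →ₗ[S] X} {Γ : S} {x : X} :
    x ∈ Rg D Γ ↔ ∃ u, D u + Γ • u = x := by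
  simp [Rg]

lemma pow_sub_mem {X : Type*} [AddCommGroup X] [Module S X] (D : X →ₗ[S] X) (Λ Γ : S)
    (n : ℕ) (w : X) :
    ((-(D + Λ • LinearMap.id) : Module.End S X) ^ n) w - Γ ^ n • w ∈ Rg D (Λ + Γ) := by
  induction n with
  | zero => simp
  | succ n ih =>
    set T : Module.End S X := -(D + Λ • LinearMap.id) with hT
    have e : (T ^ (n+1)) w - Γ ^ (n+1) • w
        = (T ((T ^ n) w) - Γ • (T ^ n) w) + Γ • ((T ^ n) w - Γ ^ n • w) := by
      rw [pow_succ' T, Module.End.mul_apply, pow_succ' Γ, mul_smul, smul_sub]; abel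
    rw [e]
    refine add_mem ?_ (Submodule.smul_mem _ _ ih)
    rw [mem_Rg]
    refine ⟨-(T ^ n) w, ?_⟩
    rw [hT]
    simp [add_smul]; abel

lemma tens_ind {P : S ⊗[F] A → Prop} (h1 : ∀ a : A, P (1 ⊗ₜ a))
    (ha : ∀ p q, P p → P q → P (p + q)) (hs : ∀ (s : S) p, P p → P (s • p)) (p : S ⊗[F] A) :
    P p := by
  induction p using TensorProduct.induction_on with
  | zero => simpa using hs 0 _ (h1 0)
  | tmul s a =>
    have := hs s _ (h1 a)
    rwa [TensorProduct.smul_tmul', smul_eq_mul, mul_one] at this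
  | add p q hp hq => exact ha _ _ hp hq

/-- evaluation of a polynomial in one variable -/
noncomputable def evN (Λ : S) (f : ℕ → N) : S ⊗[F] N := ∑ᶠ n, (Λ ^ n) ⊗ₜ[F] f n

lemma evN_sum (Λ : S) {f : ℕ → N} {B : ℕ} (h : ∀ n, B ≤ n → f n = 0) :
    evN (F := F) Λ f = ∑ n ∈ Finset.range B, (Λ ^ n) ⊗ₜ[F] f n := by
  refine finsum_eq_sum_of_support_subset _ fun n hn => ?_
  by_contra hc
  simp only [Finset.coe_range, Set.mem_Iio, not_lt] at hc
  exact hn (by simp [h n hc])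

lemma bound_of_fin {f : ℕ → N} (h : (Function.support f).Finite) : ∃ B, ∀ n, B ≤ n → f n = 0 := by
  obtain ⟨B, hB⟩ := h.bddAbove
  refine ⟨B + 1, fun n hn => ?_⟩
  by_contra hc
  have := hB hc
  omega

lemma bound2 {X : Type*} [AddCommGroup X] {f : ℕ → X} {g : X → ℕ → N}
    (h : (Function.support f).Finite) (g0 : ∀ n, g 0 n = 0)
    (hg : ∀ x, (Function.support (g x)).Finite) :
    ∃ B, ∀ m n, B ≤ m ∨ B ≤ n → g (f m) n = 0 := by
  obtain ⟨B, hB⟩ := bound_of_fin h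
  choose C hC using fun m => bound_of_fin (hg (f m))
  refine ⟨B + ∑ m ∈ Finset.range B, C m, fun m n hmn => ?_⟩
  by_cases hm : B ≤ m
  · rw [hB m hm, g0]
  · have : C m ≤ ∑ m ∈ Finset.range B, C m :=
      Finset.single_le_sum (fun _ _ => Nat.zero_le _) (by simpa using hm)
    exact hC m n (by omega)

lemma evN_add (Λ : S) {f g : ℕ → N} (hf : (Function.support f).Finite)
    (hg : (Function.support g).Finite) : evN (F := F) Λ (f + g) = evN Λ f + evN Λ g := by
  obtain ⟨B, hB⟩ := bound_of_fin hf
  obtain ⟨C, hC⟩ := bound_of_fin hg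
  rw [evN_sum (B := B + C) Λ (fun n hn => hB n (by omega)),
    evN_sum (B := B + C) Λ (fun n hn => hC n (by omega)),
    evN_sum (B := B + C) Λ (fun n hn => by simp [hB n (by omega), hC n (by omega)])]
  simp [TensorProduct.tmul_add, Finset.sum_add_distrib]

lemma evN_smul (Λ : S) (r : F) {f : ℕ → N} (hf : (Function.support f).Finite) :
    evN (F := F) Λ (r • f) = r • evN Λ f := by
  obtain ⟨B, hB⟩ := bound_of_fin hf
  rw [evN_sum (B := B) Λ hB,
    evN_sum (B := B) Λ (fun n hn => by simp [hB n (by omega)])]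
  simp [Finset.smul_sum]

variable {L : LCC.LCA F A}

/-- adjoint module -/
def adj (L : LCC.LCA F A) : LCC.LCAMod F L A where
  D := L.D
  act := L.br
  act_fin := L.br_fin
  sesq_left_zero := L.sesq_left_zero
  sesq_left := L.sesq_left
  sesq_right := L.sesq_right
  jacobi := L.jacobi

variable (S) in
noncomputable def DS (R : LCC.LCAMod F L N) : S ⊗[F] N →ₗ[S] S ⊗[F] N := R.D.baseChange S

noncomputable def act0 (R : LCC.LCAMod F L N) (Λ : S) : A →ₗ[F] N →ₗ[F] S ⊗[F] N :=
  LinearMap.mk₂ F (fun a v => evN Λ (R.act a v))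
    (fun a b v => by
      rw [map_add, LinearMap.add_apply, evN_add _ (R.act_fin _ _) (R.act_fin _ _)])
    (fun r a v => by rw [map_smul, LinearMap.smul_apply, evN_smul _ _ (R.act_fin _ _)])
    (fun a v w => by rw [map_add, evN_add _ (R.act_fin _ _) (R.act_fin _ _)])
    (fun r a v => by rw [map_smul, evN_smul _ _ (R.act_fin _ _)])

noncomputable def actS (R : LCC.LCAMod F L N) (Λ : S) :
    S ⊗[F] A →ₗ[S] S ⊗[F] N →ₗ[S] S ⊗[F] N :=
  LinearMap.liftBaseChange S
    (((LinearMap.liftBaseChangeEquiv S).toLinearMap.restrictScalars F) ∘ₗ act0 R Λ)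

lemma actS_pure (R : LCC.LCAMod F L N) (Λ : S) (a : A) (v : N) :
    actS R Λ (1 ⊗ₜ a) (1 ⊗ₜ v) = evN Λ (R.act a v) := by
  simp [actS, act0]

lemma DS_pure (R : LCC.LCAMod F L N) (v : N) (s : S) : DS S R (s ⊗ₜ v) = s ⊗ₜ R.D v := by
  simp [DS]

lemma tmul_eq (s : S) (v : N) : s ⊗ₜ[F] v = s • ((1 : S) ⊗ₜ[F] v) := by
  rw [TensorProduct.smul_tmul', smul_eq_mul, mul_one]

lemma actS_D_left (R : LCC.LCAMod F L N) (Λ : S) (p : S ⊗[F] A) (v : S ⊗[F] N) :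
    actS R Λ (DS S (adj L) p + Λ • p) v = 0 := by
  induction p using tens_ind with
  | ha p q hp hq =>
    have e : DS S (adj L) (p + q) + Λ • (p + q)
      = (DS S (adj L) p + Λ • p) + (DS S (adj L) q + Λ • q) := by
        rw [map_add, smul_add]; abel
    rw [e, map_add, LinearMap.add_apply, hp, hq, add_zero]
  | hs s p hp =>
    have e : DS S (adj L) (s • p) + Λ • (s • p) = s • (DS S (adj L) p + Λ • p) := by
        rw [map_smul, smul_add, smul_comm]
    rw [e, map_smul, LinearMap.smul_apply, hp, smul_zero]
  | h1 a =>
    induction v using tens_ind with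
    | ha p q hp hq => rw [map_add, hp, hq, add_zero]
    | hs s p hp => rw [map_smul, hp, smul_zero]
    | h1 v =>
      rw [DS_pure, map_add, map_smul, LinearMap.add_apply, LinearMap.smul_apply, actS_pure,
        actS_pure]
      obtain ⟨B, hB⟩ := bound_of_fin (R.act_fin a v)
      rw [evN_sum Λ hB, evN_sum (B := B + 1), Finset.sum_range_succ', Finset.smul_sum]
      · have e0 : R.act ((adj L).D a) v 0 = 0 := R.sesq_left_zero a v
        have e1 : ∀ n, R.act ((adj L).D a) v (n+1) = - R.act a v n := R.sesq_left a v
        simp only [e0, e1, TensorProduct.tmul_zero, add_zero]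
        rw [← Finset.sum_add_distrib]
        refine Finset.sum_eq_zero fun n _ => ?_
        rw [TensorProduct.smul_tmul', smul_eq_mul, TensorProduct.tmul_neg, pow_succ']
        simp
      · intro n hn
        obtain ⟨m, rfl⟩ : ∃ m, n = m + 1 := ⟨n - 1, by omega⟩
        have e1 : R.act ((adj L).D a) v (m+1) = - R.act a v m := R.sesq_left a v m
        rw [e1, hB m (by omega), neg_zero]

lemma actS_D_right (R : LCC.LCAMod F L N) (Λ : S) (p : S ⊗[F] A) (v : S ⊗[F] N) :
    actS R Λ p (DS S R v) = DS S R (actS R Λ p v) + Λ • actS R Λ p v := by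
  induction p using tens_ind with
  | ha p q hp hq =>
    simp only [map_add, LinearMap.add_apply, hp, hq, smul_add]; abel
  | hs s p hp =>
    simp only [map_smul, LinearMap.smul_apply, hp, smul_add, smul_comm s]
  | h1 a =>
    induction v using tens_ind with
    | ha p q hp hq => simp only [map_add, hp, hq, smul_add]; abel
    | hs s p hp => simp only [map_smul, hp, smul_add, smul_comm s]
    | h1 v =>
      rw [DS_pure, actS_pure, actS_pure]
      obtain ⟨B, hB⟩ := bound_of_fin (R.act_fin a v)
      have hB1 : ∀ n, B + 1 ≤ n → R.act a v n = 0 := fun n hn => hB n (by omega)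
      have e2 : evN (F := F) Λ (R.act a (R.D v)) =
          ∑ n ∈ Finset.range (B+1), (Λ ^ n) ⊗ₜ[F] R.act a (R.D v) n := by
        refine evN_sum Λ fun n hn => ?_
        rw [R.sesq_right, hB n (by omega), hB (n-1) (by omega)]
        simp
      have e3 : DS S R (evN (F := F) Λ (R.act a v)) =
          ∑ n ∈ Finset.range (B+1), (Λ ^ n) ⊗ₜ[F] R.D (R.act a v n) := by
        rw [evN_sum Λ hB1, map_sum]
        simp only [DS_pure]
      have e4 : Λ • (evN (F := F) Λ (R.act a v)) =
          ∑ n ∈ Finset.range (B+1), (Λ ^ n) ⊗ₜ[F] (if n = 0 then 0 else R.act a v (n-1)) := by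
        rw [evN_sum Λ hB, Finset.sum_range_succ', Finset.smul_sum]
        simp [TensorProduct.smul_tmul', pow_succ']
      rw [e2, e3, e4, ← Finset.sum_add_distrib]
      refine Finset.sum_congr rfl fun n _ => ?_
      rw [R.sesq_right, TensorProduct.tmul_add]

lemma jac_sum (u : ℕ → ℕ → N) (B : ℕ) (hu : ∀ p q, B ≤ p ∨ B ≤ q → u p q = 0) (Λ Γ : S) :
    ∑ m ∈ Finset.range (2*B), ∑ n ∈ Finset.range (2*B), (Λ ^ m * Γ ^ n) ⊗ₜ[F]
      (∑ j ∈ Finset.range (m+1), (((n+j).choose j : F)) • u (m-j) (n+j))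
    = ∑ p ∈ Finset.range B, ∑ q ∈ Finset.range B, (Λ ^ p * (Λ + Γ) ^ q) ⊗ₜ[F] u p q := by
  have e1 : ∀ p q, (Λ ^ p * (Λ + Γ) ^ q) ⊗ₜ[F] u p q = ∑ j ∈ Finset.range (q+1),
      (Λ ^ (p + j) * Γ ^ (q - j)) ⊗ₜ[F] (((q.choose j : F)) • u p q) := by
    intro p q
    rw [add_pow, Finset.mul_sum, TensorProduct.sum_tmul]
    refine Finset.sum_congr rfl fun j _ => ?_
    rw [← TensorProduct.smul_tmul, Algebra.smul_def, map_natCast]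
    congr 1
    ring
  simp only [e1, TensorProduct.tmul_sum]
  simp only [Finset.sum_sigma']
  refine Finset.sum_bij_ne_zero (fun t _ _ => ⟨t.1 - t.2.2, t.2.1 + t.2.2, t.2.2⟩) ?_ ?_ ?_ ?_
  · rintro ⟨m, n, j⟩ h1 h2
    simp only [Finset.mem_sigma, Finset.mem_range] at h1 ⊢
    by_contra hc
    apply h2
    have : u (m - j) (n + j) = 0 := hu _ _ (by omega)
    simp [this]
  · rintro ⟨m, n, j⟩ h1 _ ⟨m', n', j'⟩ h1' _ h
    simp only [Finset.mem_sigma, Finset.mem_range] at h1 h1'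
    simp only [Sigma.mk.injEq, heq_eq_eq] at h
    obtain ⟨h2, h3, rfl⟩ := h
    have : m = m' := by omega
    have : n = n' := by omega
    subst_vars; rfl
  · rintro ⟨p, q, j⟩ h1 h2
    simp only [Finset.mem_sigma, Finset.mem_range] at h1
    refine ⟨⟨p + j, q - j, j⟩, ?_, ?_, ?_⟩
    · simp only [Finset.mem_sigma, Finset.mem_range]; omega
    · have e1 : p + j - j = p := by omega
      have e2 : q - j + j = q := by omega
      simpa [e1, e2] using h2
    · have e1 : p + j - j = p := by omega
      have e2 : q - j + j = q := by omega
      simp [e1, e2]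
  · rintro ⟨m, n, j⟩ h1 _
    simp only [Finset.mem_sigma, Finset.mem_range] at h1
    have e1 : m - j + j = m := by omega
    have e2 : n + j - j = n := by omega
    simp [e1, e2]

lemma actS_evN (R : LCC.LCAMod F L N) (Λ : S) (a : A) (s : S) (v : N) :
    actS R Λ (1 ⊗ₜ a) (s ⊗ₜ v) = s • evN Λ (R.act a v) := by
  rw [tmul_eq s v, map_smul, actS_pure]

lemma actS_evN' (R : LCC.LCAMod F L N) (Λ : S) (a : A) (s : S) (v : N) :
    actS R Λ (s ⊗ₜ a) (1 ⊗ₜ v) = s • evN Λ (R.act a v) := by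
  rw [tmul_eq s a, map_smul, LinearMap.smul_apply, actS_pure]

lemma actS_jac (R : LCC.LCAMod F L N) (Λ Γ : S) (p q : S ⊗[F] A) (v : S ⊗[F] N) :
    actS R Λ p (actS R Γ q v) - actS R Γ q (actS R Λ p v)
      = actS R (Λ + Γ) (actS (adj L) Λ p q) v := by
  induction p using tens_ind with
  | ha p q hp hq =>
    simp only [map_add, LinearMap.add_apply, ← hp, ← hq]; abel
  | hs s p hp =>
    simp only [map_smul, LinearMap.smul_apply, ← hp, smul_sub]
  | h1 a =>
  induction q using tens_ind with
  | ha p q hp hq =>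
    simp only [map_add, LinearMap.add_apply, ← hp, ← hq]; abel
  | hs s p hp =>
    simp only [map_smul, LinearMap.smul_apply, ← hp, smul_sub]
  | h1 b =>
  induction v using tens_ind with
  | ha p q hp hq =>
    simp only [map_add, ← hp, ← hq]; abel
  | hs s p hp =>
    simp only [map_smul, ← hp, smul_sub]
  | h1 v =>
  obtain ⟨B1, h1⟩ := bound2 (f := R.act b v) (g := fun x => R.act a x) (R.act_fin b v)
    (by simp) (fun x => R.act_fin a x)
  obtain ⟨B2, h2⟩ := bound2 (f := R.act a v) (g := fun x => R.act b x) (R.act_fin a v)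
    (by simp) (fun x => R.act_fin b x)
  obtain ⟨B3, h3⟩ := bound2 (f := L.br a b) (g := fun x => R.act x v) (L.br_fin a b)
    (by simp) (fun x => R.act_fin x v)
  obtain ⟨B4, h4⟩ := bound_of_fin (R.act_fin b v)
  obtain ⟨B5, h5⟩ := bound_of_fin (R.act_fin a v)
  obtain ⟨B6, h6⟩ := bound_of_fin (L.br_fin a b)
  set B := B1 + B2 + B3 + B4 + B5 + B6 with hB
  have k1 : actS R Λ (1 ⊗ₜ a) (actS R Γ (1 ⊗ₜ b) (1 ⊗ₜ v)) =
      ∑ m ∈ Finset.range (2*B), ∑ n ∈ Finset.range (2*B), (Λ ^ m * Γ ^ n) ⊗ₜ[F]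
        R.act a (R.act b v n) m := by
    rw [actS_pure, evN_sum (B := 2*B) Γ (fun n hn => h4 n (by omega)), map_sum, Finset.sum_comm]
    refine Finset.sum_congr rfl fun n _ => ?_
    rw [actS_evN, evN_sum (B := 2*B) Λ (fun m hm => h1 n m (by omega)), Finset.smul_sum]
    refine Finset.sum_congr rfl fun m _ => ?_
    rw [TensorProduct.smul_tmul', smul_eq_mul, mul_comm]
  have k2 : actS R Γ (1 ⊗ₜ b) (actS R Λ (1 ⊗ₜ a) (1 ⊗ₜ v)) =
      ∑ m ∈ Finset.range (2*B), ∑ n ∈ Finset.range (2*B), (Λ ^ m * Γ ^ n) ⊗ₜ[F]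
        R.act b (R.act a v m) n := by
    rw [actS_pure, evN_sum (B := 2*B) Λ (fun n hn => h5 n (by omega)), map_sum]
    refine Finset.sum_congr rfl fun m _ => ?_
    rw [actS_evN, evN_sum (B := 2*B) Γ (fun n hn => h2 m n (by omega)), Finset.smul_sum]
    refine Finset.sum_congr rfl fun n _ => ?_
    rw [TensorProduct.smul_tmul', smul_eq_mul]
  have k3 : actS R (Λ + Γ) (actS (adj L) Λ (1 ⊗ₜ a) (1 ⊗ₜ b)) (1 ⊗ₜ v) =
      ∑ p ∈ Finset.range B, ∑ q ∈ Finset.range B, (Λ ^ p * (Λ + Γ) ^ q) ⊗ₜ[F]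
        R.act (L.br a b p) v q := by
    have e : (adj L).act = L.br := rfl
    rw [actS_pure, e, evN_sum (B := B) Λ (fun n hn => h6 n (by omega)), map_sum,
      LinearMap.sum_apply]
    refine Finset.sum_congr rfl fun p _ => ?_
    rw [actS_evN', evN_sum (B := B) _ (fun n hn => h3 p n (by omega)), Finset.smul_sum]
    refine Finset.sum_congr rfl fun n _ => ?_
    rw [TensorProduct.smul_tmul', smul_eq_mul]
  rw [k1, k2, k3, ← jac_sum (fun p q => R.act (L.br a b p) v q) B
    (fun p q h => h3 p q (by omega))]
  simp only [← Finset.sum_sub_distrib, ← TensorProduct.tmul_sub, R.jacobi]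

/-- powers of `-(D+Λ)` on pure tensors -/
lemma pow_pure (R : LCC.LCAMod F L N) (Λ : S) (n : ℕ) (w : N) :
    ((-(DS S R + Λ • LinearMap.id) : Module.End S (S ⊗[F] N)) ^ n) (1 ⊗ₜ w) =
      ∑ m ∈ Finset.range (n+1), (Λ ^ m) ⊗ₜ[F]
        (((-1 : F) ^ n * (n.choose m : F)) • (R.D ^ (n - m)) w) := by
  have hD : ∀ k (s : S), ((DS S R : Module.End S (S ⊗[F] N)) ^ k) (s ⊗ₜ w)
      = s ⊗ₜ (R.D ^ k) w := by
    intro k s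
    induction k with
    | zero => simp
    | succ k ih => rw [pow_succ', Module.End.mul_apply, ih, DS_pure, pow_succ', Module.End.mul_apply]
  have hc : Commute (Λ • (1 : Module.End S (S ⊗[F] N))) (DS S R) := by
    rw [commute_iff_eq]; ext; simp
  have e : (-(DS S R + Λ • LinearMap.id) : Module.End S (S ⊗[F] N))
      = (-1 : S) • (Λ • (1 : Module.End S (S ⊗[F] N)) + DS S R) := by
    refine LinearMap.ext fun x => ?_
    have h := neg_smul (1 : S) (Λ • x + DS S R x)
    rw [one_smul] at h
    refine Eq.trans ?_ h.symm
    rw [add_comm]; rfl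
  rw [e, smul_pow, hc.add_pow, LinearMap.smul_apply, LinearMap.sum_apply, Finset.smul_sum]
  refine Finset.sum_congr rfl fun m _ => ?_
  rw [smul_pow, one_pow, smul_mul_assoc, one_mul, smul_mul_assoc, LinearMap.smul_apply,
    Module.End.mul_apply]
  have : ((n.choose m : ℕ) : Module.End S (S ⊗[F] N)) (1 ⊗ₜ[F] w)
      = (n.choose m : S) ⊗ₜ[F] w := by
    rw [Module.End.natCast_apply, TensorProduct.smul_tmul']; simp
  rw [this, hD, TensorProduct.smul_tmul', TensorProduct.smul_tmul', TensorProduct.tmul_smul,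
    TensorProduct.smul_tmul']
  congr 1
  rw [Algebra.smul_def ((-1 : F) ^ n * (n.choose m : F)) (Λ ^ m), map_mul, map_pow, map_neg, map_one, map_natCast]
  simp only [smul_eq_mul]
  ring

lemma br_skewS (Λ Γ : S) (p q : S ⊗[F] A) :
    actS (adj L) Λ p q + actS (adj L) Γ q p ∈ Rg (DS S (adj L)) (Λ + Γ) := by
  induction p using tens_ind with
  | ha p q hp hq =>
    have := add_mem hp hq
    simp only [map_add, LinearMap.add_apply]
    convert this using 1; abel
  | hs s p hp =>
    have := Submodule.smul_mem _ s hp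
    simpa only [map_smul, LinearMap.smul_apply, smul_add] using this
  | h1 a =>
  induction q using tens_ind with
  | ha p q hp hq =>
    have := add_mem hp hq
    simp only [map_add, LinearMap.add_apply]
    convert this using 1; abel
  | hs s p hp =>
    have := Submodule.smul_mem _ s hp
    simpa only [map_smul, LinearMap.smul_apply, smul_add] using this
  | h1 b =>
  obtain ⟨B, hB⟩ := bound_of_fin (L.br_fin b a)
  have k1 : ∀ m, L.br a b m = - ∑ n ∈ Finset.range B,
      (((-1 : F)^n * (n.choose m : F)) • ((L.D ^ (n - m)) (L.br b a n))) := by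
    intro m
    rw [L.skew]
    congr 1
    refine finsum_eq_sum_of_support_subset _ fun n hn => ?_
    by_contra hc
    simp only [Finset.coe_range, Set.mem_Iio, not_lt] at hc
    exact hn (by simp [hB n hc])
  have k2 : evN (F := F) Λ (L.br a b) = - ∑ n ∈ Finset.range B,
      ((-(DS S (adj L) + Λ • LinearMap.id) : Module.End S (S ⊗[F] A)) ^ n) (1 ⊗ₜ L.br b a n) := by
    rw [evN_sum (B := B) Λ]
    · simp only [k1, TensorProduct.tmul_neg, TensorProduct.tmul_sum, Finset.sum_neg_distrib]
      rw [Finset.sum_comm]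
      congr 1
      refine Finset.sum_congr rfl fun n hn => ?_
      rw [pow_pure]
      have e : (adj L).D = L.D := rfl
      rw [e]
      symm
      apply Finset.sum_subset
      · intro m hm; simp only [Finset.mem_range] at *; omega
      · intro m _ hm
        rw [Nat.choose_eq_zero_of_lt (by simpa using hm)]
        simp
    · intro m hm
      rw [k1, neg_eq_zero]
      refine Finset.sum_eq_zero fun n hn => ?_
      rw [Nat.choose_eq_zero_of_lt (by simp at hn; omega)]
      simp
  have e : (adj L).act = L.br := rfl
  rw [actS_pure, actS_pure, e, k2, evN_sum Γ hB, neg_add_eq_sub, ← neg_mem_iff, neg_sub,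
    ← Finset.sum_sub_distrib]
  refine sum_mem fun n _ => ?_
  rw [tmul_eq (Γ ^ n)]
  exact pow_sub_mem _ _ _ _ _

end base
end LCCP

namespace LCCP
open scoped TensorProduct

section system
variable {F : Type*} [Field F] {S : Type*} [CommRing S] [Algebra F S]
variable {A M : Type*} [AddCommGroup A] [Module F A] [AddCommGroup M] [Module F M]
variable {L : LCC.LCA F A}

variable (S) in
/-- families of elements in the ranges -/
def WW (R : LCC.LCAMod F L M) : Submodule S (S → S ⊗[F] M) where
  carrier := {f | ∀ Γ, f Γ ∈ Rg (DS S R) Γ}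
  add_mem' := fun hf hg Γ => add_mem (hf Γ) (hg Γ)
  zero_mem' := fun Γ => zero_mem _
  smul_mem' := fun s _ hf Γ => Submodule.smul_mem _ s (hf Γ)

variable (S) in
/-- target of cochains -/
abbrev VV (R : LCC.LCAMod F L M) : Type _ := (S → S ⊗[F] M) ⧸ WW S R

/-- shifted action on families -/
noncomputable def actF (R : LCC.LCAMod F L M) (Λ : S) :
    S ⊗[F] A →ₗ[S] (S → S ⊗[F] M) →ₗ[S] (S → S ⊗[F] M) :=
  LinearMap.mk₂ S (fun p f Γ => actS R Λ p (f (Γ - Λ)))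
    (fun p q f => by ext Γ; simp)
    (fun s p f => by ext Γ; simp)
    (fun p f g => by ext Γ; simp)
    (fun s p f => by ext Γ; simp)

lemma actF_apply (R : LCC.LCAMod F L M) (Λ : S) (p f Γ) :
  actF R Λ p f Γ = actS R Λ p (f (Γ - Λ)) := rfl

lemma actS_mem (R : LCC.LCAMod F L M) (Λ Γ : S) (p : S ⊗[F] A) {m : S ⊗[F] M}
    (hm : m ∈ Rg (DS S R) Γ) : actS R Λ p m ∈ Rg (DS S R) (Λ + Γ) := by
  rw [mem_Rg] at *
  obtain ⟨u, rfl⟩ := hm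
  refine ⟨actS R Λ p u, ?_⟩
  rw [map_add, actS_D_right, map_smul, add_smul, add_assoc]

lemma actF_mem (R : LCC.LCAMod F L M) (Λ : S) (p : S ⊗[F] A) :
    WW S R ≤ (WW S R).comap (actF R Λ p) := by
  intro f hf Γ
  have := actS_mem R Λ (Γ - Λ) p (hf (Γ - Λ))
  rwa [add_sub_cancel] at this

noncomputable def rhoV (R : LCC.LCAMod F L M) (Λ : S) : S ⊗[F] A →ₗ[S] VV S R →ₗ[S] VV S R where
  toFun p := (WW S R).mapQ (WW S R) (actF R Λ p) (actF_mem R Λ p)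
  map_add' p q := by
    apply Submodule.linearMap_qext; ext f : 1; simp
  map_smul' s p := by
    apply Submodule.linearMap_qext; ext f : 1; simp

lemma rhoV_mk (R : LCC.LCAMod F L M) (Λ : S) (p f) :
    rhoV R Λ p ((WW S R).mkQ f) = (WW S R).mkQ (actF R Λ p f) := rfl

variable (S) in
noncomputable def sys (R : LCC.LCAMod F L M) : Sys S (S ⊗[F] A) (VV S R) where
  D := DS S (adj L)
  br := actS (adj L)
  ρ := rhoV R
  br_D_left := fun Λ p q => actS_D_left _ _ _ _
  br_D_right := fun Λ Γ p q => by
    rw [map_add, actS_D_right, map_smul, add_smul, add_assoc]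
  ρ_D := fun Λ p v => by
    obtain ⟨f, rfl⟩ := Submodule.mkQ_surjective _ v
    rw [rhoV_mk]
    have : actF R Λ (DS S (adj L) p + Λ • p) f = 0 := by
      funext Γ; rw [actF_apply, actS_D_left]; rfl
    rw [this, map_zero]
  br_skew := fun Λ Γ p q => by
    obtain ⟨u, hu⟩ := mem_Rg.1 (br_skewS (L := L) Λ Γ p q)
    exact ⟨u, hu.symm⟩
  br_jac := fun Λ Γ p q r => actS_jac _ _ _ _ _ _
  ρ_jac := fun Λ Γ p q v => by
    obtain ⟨f, rfl⟩ := Submodule.mkQ_surjective _ v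
    rw [rhoV_mk, rhoV_mk, rhoV_mk, rhoV_mk, rhoV_mk, ← map_sub]
    congr 1
    funext Θ
    rw [Pi.sub_apply]
    simp only [actF_apply]
    rw [← actS_jac, sub_sub, sub_sub, add_comm Γ Λ]

open Classical in
/-- the embedding of the degree `Γ` component -/
noncomputable def emb (R : LCC.LCAMod F L M) (Γ : S) : S ⊗[F] M →ₗ[S] VV S R :=
  (WW S R).mkQ ∘ₗ LinearMap.single S (fun _ : S => S ⊗[F] M) Γ

lemma emb_eq_zero (R : LCC.LCAMod F L M) (Γ : S) (m : S ⊗[F] M) :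
    emb R Γ m = 0 ↔ m ∈ Rg (DS S R) Γ := by
  classical
  rw [emb, LinearMap.comp_apply, Submodule.mkQ_apply, Submodule.Quotient.mk_eq_zero]
  constructor
  · intro h
    have := h Γ
    simpa using this
  · intro h Θ
    by_cases hΘ : Θ = Γ
    · subst hΘ; simpa using h
    · simp [Pi.single_eq_of_ne hΘ]

lemma emb_congr (R : LCC.LCAMod F L M) (Γ : S) {m n : S ⊗[F] M}
    (h : m - n ∈ Rg (DS S R) Γ) : emb R Γ m = emb R Γ n := by
  rw [← sub_eq_zero, ← map_sub, emb_eq_zero]; exact h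

lemma act_emb (R : LCC.LCAMod F L M) (Λ Γ : S) (p : S ⊗[F] A) (m : S ⊗[F] M) :
    (sys S R).act (p, Λ) (emb R Γ m) = emb R (Λ + Γ) (actS R Λ p m) := by
  classical
  change rhoV R Λ p _ = _
  rw [emb, LinearMap.comp_apply, rhoV_mk, emb, LinearMap.comp_apply]
  congr 1
  funext Θ
  rw [actF_apply]
  by_cases h : Θ = Λ + Γ
  · subst h; simp
  · have h' : Θ - Λ ≠ Γ := fun e => h (by rw [← e]; ring)
    simp [Pi.single_eq_of_ne h, Pi.single_eq_of_ne h']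

end system
end LCCP

namespace LCCP
open scoped TensorProduct

section evalu
variable {F : Type*} [Field F] {S : Type*} [CommRing S] [Algebra F S]
variable {M : Type*} [AddCommGroup M] [Module F M]

/-- polynomials with coefficients in `M` -/
abbrev PM (M : Type*) [AddCommGroup M] (K : ℕ) := (Fin K → ℕ) →₀ M

/-- evaluation -/
noncomputable def ev {K : ℕ} (Λ : Fin K → S) : PM M K →ₗ[F] S ⊗[F] M :=
  Finsupp.lsum F (fun ν => TensorProduct.mk F S M (∏ i, Λ i ^ ν i))

lemma ev_single {K : ℕ} (Λ : Fin K → S) (ν : Fin K → ℕ) (m : M) :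
    ev (F := F) Λ (Finsupp.single ν m) = (∏ i, Λ i ^ ν i) ⊗ₜ[F] m := by
  simp [ev]

/-- multiplication by `λ_i` -/
noncomputable def shift (F : Type*) [Field F] {M : Type*} [AddCommGroup M] [Module F M]
    {K : ℕ} (i : Fin K) : PM M K →ₗ[F] PM M K :=
  Finsupp.lmapDomain M F (fun ν => Function.update ν i (ν i + 1))

lemma upd_inj {K : ℕ} (i : Fin K) :
    Function.Injective (fun ν : Fin K → ℕ => Function.update ν i (ν i + 1)) := by
  intro ν μ h
  funext j
  have := congrFun h j
  by_cases hj : j = i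
  · subst hj; simpa using this
  · simpa [Function.update_of_ne hj] using this

lemma shift_apply {K : ℕ} (i : Fin K) (φ : PM M K) (ν : Fin K → ℕ) :
    shift F i φ ν = if ν i = 0 then 0 else φ (Function.update ν i (ν i - 1)) := by
  rw [shift, Finsupp.lmapDomain_apply]
  split_ifs with h
  · apply Finsupp.mapDomain_of_notMem_range
    rintro ⟨μ, rfl⟩
    simp at h
  · conv_lhs => rw [show ν = (fun ν : Fin K → ℕ => Function.update ν i (ν i + 1))
      (Function.update ν i (ν i - 1)) by
        simp only [Function.update_self, Function.update_idem]
        rw [Nat.sub_add_cancel (by omega), Function.update_eq_self]]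
    rw [Finsupp.mapDomain_apply (upd_inj i)]

lemma shift_single {K : ℕ} (i : Fin K) (ν : Fin K → ℕ) (m : M) :
    shift F i (Finsupp.single ν m) = Finsupp.single (Function.update ν i (ν i + 1)) m := by
  simp [shift]

lemma prod_update {K : ℕ} (Λ : Fin K → S) (i : Fin K) (ν : Fin K → ℕ) :
    ∏ j, Λ j ^ (Function.update ν i (ν i + 1) j) = Λ i * ∏ j, Λ j ^ ν j := by
  rw [← Finset.mul_prod_erase _ _ (Finset.mem_univ i),
    ← Finset.mul_prod_erase Finset.univ (fun j => Λ j ^ ν j) (Finset.mem_univ i),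
    Function.update_self, pow_succ', mul_assoc]
  congr 2
  refine Finset.prod_congr rfl fun j hj => ?_
  rw [Function.update_of_ne (Finset.ne_of_mem_erase hj)]

lemma ev_shift {K : ℕ} (Λ : Fin K → S) (i : Fin K) (φ : PM M K) :
    ev (F := F) Λ (shift F i φ) = Λ i • ev Λ φ := by
  induction φ using Finsupp.induction_linear with
  | zero => simp
  | add f g hf hg => rw [map_add, map_add, hf, hg, map_add, smul_add]
  | single ν m =>
    rw [shift_single, ev_single, ev_single, prod_update, TensorProduct.smul_tmul', smul_eq_mul]

lemma shift_pow_apply {K : ℕ} (i : Fin K) (p : ℕ) (φ : PM M K) (ν : Fin K → ℕ) :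
    ((shift F i : Module.End F (PM M K)) ^ p) φ ν
      = if p ≤ ν i then φ (Function.update ν i (ν i - p)) else 0 := by
  induction p generalizing ν with
  | zero => simp
  | succ p ih =>
    rw [pow_succ', Module.End.mul_apply, shift_apply, ih]
    simp only [Function.update_self, Function.update_idem]
    by_cases h : ν i = 0
    · simp [h]
    · rw [if_neg h]
      by_cases h2 : p + 1 ≤ ν i
      · rw [if_pos (by omega), if_pos h2, Nat.sub_sub, Nat.add_comm 1 p]
      · rw [if_neg (by omega), if_neg h2]

lemma ev_shift_pow {K : ℕ} (Λ : Fin K → S) (i : Fin K) (p : ℕ) (φ : PM M K) :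
    ev (F := F) Λ (((shift F i : Module.End F (PM M K)) ^ p) φ) = Λ i ^ p • ev Λ φ := by
  induction p with
  | zero => simp
  | succ p ih => rw [pow_succ', Module.End.mul_apply, ev_shift, ih, smul_smul, pow_succ']

/-- insertion of a variable with exponent `p` -/
noncomputable def insP (F : Type*) [Field F] {M : Type*} [AddCommGroup M] [Module F M]
    {K : ℕ} (i : Fin (K+1)) (p : ℕ) : PM M K →ₗ[F] PM M (K+1) :=
  Finsupp.lmapDomain M F (fun ν => i.insertNth p ν)

lemma insP_single {K : ℕ} (i : Fin (K+1)) (p : ℕ) (ν : Fin K → ℕ) (m : M) :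
    insP F i p (Finsupp.single ν m) = Finsupp.single (i.insertNth p ν : Fin (K+1) → ℕ) m := by
  simp [insP]

lemma insP_apply {K : ℕ} (i : Fin (K+1)) (p : ℕ) (φ : PM M K) (ν : Fin (K+1) → ℕ) :
    insP F i p φ ν = if ν i = p then φ (i.removeNth ν) else 0 := by
  rw [insP, Finsupp.lmapDomain_apply]
  split_ifs with h
  · conv_lhs => rw [show ν = (fun μ : Fin K → ℕ => (i.insertNth p μ : Fin (K+1) → ℕ))
      (i.removeNth ν) by rw [← h]; simp]
    rw [Finsupp.mapDomain_apply]
    intro a b hab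
    exact (Fin.insertNth_right_injective _ hab)
  · apply Finsupp.mapDomain_of_notMem_range
    rintro ⟨μ, rfl⟩
    simp at h

lemma ev_insP {K : ℕ} (Λ : Fin (K+1) → S) (i : Fin (K+1)) (p : ℕ) (φ : PM M K) :
    ev (F := F) Λ (insP F i p φ) = Λ i ^ p • ev (i.removeNth Λ) φ := by
  induction φ using Finsupp.induction_linear with
  | zero => simp
  | add f g hf hg => rw [map_add, map_add, hf, hg, map_add, smul_add]
  | single ν m =>
    rw [insP_single, ev_single, ev_single, TensorProduct.smul_tmul', smul_eq_mul,
      Fin.prod_univ_succAbove _ i]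
    simp [Fin.removeNth]

/-- permutation of variables -/
noncomputable def perm (F : Type*) [Field F] {M : Type*} [AddCommGroup M] [Module F M]
    {K : ℕ} (σ : Equiv.Perm (Fin K)) : PM M K →ₗ[F] PM M K :=
  Finsupp.lmapDomain M F (fun ν => ν ∘ σ.symm)

lemma perm_single {K : ℕ} (σ : Equiv.Perm (Fin K)) (ν : Fin K → ℕ) (m : M) :
    perm F σ (Finsupp.single ν m) = Finsupp.single (ν ∘ σ.symm) m := by
  simp [perm]

lemma perm_apply {K : ℕ} (σ : Equiv.Perm (Fin K)) (φ : PM M K) (ν : Fin K → ℕ) :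
    perm F σ φ ν = φ (ν ∘ σ) := by
  rw [perm, Finsupp.lmapDomain_apply]
  conv_lhs => rw [show ν = (fun μ : Fin K → ℕ => μ ∘ σ.symm) (ν ∘ σ) by
    funext i; simp]
  rw [Finsupp.mapDomain_apply]
  intro a b hab
  funext i
  simpa using congrFun hab (σ i)

lemma ev_perm {K : ℕ} (Λ : Fin K → S) (σ : Equiv.Perm (Fin K)) (φ : PM M K) :
    ev (F := F) Λ (perm F σ φ) = ev (Λ ∘ σ) φ := by
  induction φ using Finsupp.induction_linear with
  | zero => simp
  | add f g hf hg => rw [map_add, map_add, hf, hg, map_add]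
  | single ν m =>
    rw [perm_single, ev_single, ev_single]
    congr 1
    rw [← Equiv.prod_comp σ]
    simp

/-- the operator `T = -(D + λ_1 + ... + λ_K)` -/
noncomputable def TT {K : ℕ} (D : M →ₗ[F] M) : Module.End F (PM M K) :=
  -(Finsupp.mapRange.linearMap D + ∑ i, shift F i)

lemma TT_apply {K : ℕ} (D : M →ₗ[F] M) (φ : PM M K) (ν : Fin K → ℕ) :
    TT D φ ν = -(D (φ ν) + ∑ i, if ν i = 0 then 0 else φ (Function.update ν i (ν i - 1))) := by
  simp [TT, shift_apply]

lemma ev_D {K : ℕ} (D : M →ₗ[F] M) (Λ : Fin K → S) (φ : PM M K) :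
    ev (F := F) Λ (Finsupp.mapRange.linearMap D φ) = D.baseChange S (ev Λ φ) := by
  induction φ using Finsupp.induction_linear with
  | zero => simp
  | add f g hf hg => rw [map_add, map_add, hf, hg, map_add, map_add]
  | single ν m => simp [ev_single]

lemma ev_TT {K : ℕ} (D : M →ₗ[F] M) (Λ : Fin K → S) (φ : PM M K) :
    ev (F := F) Λ (TT D φ) = (-(D.baseChange S + (∑ i, Λ i) • LinearMap.id) :
      Module.End S (S ⊗[F] M)) (ev Λ φ) := by
  simp only [TT, LinearMap.neg_apply, LinearMap.add_apply, LinearMap.sum_apply, map_neg, map_add,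
    map_sum, ev_D, ev_shift, LinearMap.smul_apply, LinearMap.id_apply, Finset.sum_smul]

lemma ev_TT_pow {K : ℕ} (D : M →ₗ[F] M) (Λ : Fin K → S) (n : ℕ) (φ : PM M K) :
    ev (F := F) Λ ((TT D ^ n) φ) = ((-(D.baseChange S + (∑ i, Λ i) • LinearMap.id) :
      Module.End S (S ⊗[F] M)) ^ n) (ev Λ φ) := by
  induction n with
  | zero => simp
  | succ n ih => rw [pow_succ', Module.End.mul_apply, ev_TT, ih, pow_succ', Module.End.mul_apply]

/-- substitution of `λ_{K+1}` by `-(D + λ_1 + ... + λ_K)` -/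
noncomputable def dag {K : ℕ} (D : M →ₗ[F] M) : PM M (K+1) →ₗ[F] PM M K :=
  Finsupp.lsum F (fun μ => (TT D ^ μ (Fin.last K)) ∘ₗ Finsupp.lsingle (Fin.init μ))

lemma dag_single {K : ℕ} (D : M →ₗ[F] M) (μ : Fin (K+1) → ℕ) (m : M) :
    dag D (Finsupp.single μ m) = (TT D ^ μ (Fin.last K)) (Finsupp.single (Fin.init μ) m) := by
  simp [dag]

lemma ev_dag {K : ℕ} (D : M →ₗ[F] M) (Λ : Fin (K+1) → S) (φ : PM M (K+1)) :
    ev (F := F) (Fin.init Λ) (dag D φ) - ev Λ φ ∈ Rg (D.baseChange S) (∑ i, Λ i) := by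
  induction φ using Finsupp.induction_linear with
  | zero => simp
  | add f g hf hg =>
    have := add_mem hf hg
    rw [map_add, map_add, map_add]
    convert this using 1; abel
  | single μ m =>
    rw [dag_single, ev_TT_pow, ev_single, ev_single, Fin.sum_univ_castSucc, Fin.prod_univ_castSucc]
    have := pow_sub_mem (D.baseChange S) (∑ i, Fin.init Λ i) (Λ (Fin.last K)) (μ (Fin.last K))
      ((∏ i, Fin.init Λ i ^ Fin.init μ i) ⊗ₜ[F] m)
    rw [TensorProduct.smul_tmul', smul_eq_mul, mul_comm] at this
    exact this

end evalu
end LCCP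

namespace LCCP
open scoped TensorProduct

section coef
variable {F : Type*} [Field F]
variable {M : Type*} [AddCommGroup M] [Module F M]

/-- truncated multinomial coefficient -/
def cc {K : ℕ} (δ : Fin K → ℕ) (n : ℕ) : ℕ :=
  if LCC.wt δ ≤ n then LCC.mnom δ (n - LCC.wt δ) else 0

lemma mnom_spec {K : ℕ} (δ : Fin K → ℕ) (s : ℕ) :
    LCC.mnom δ s * ((∏ r, (δ r).factorial) * s.factorial) = (LCC.wt δ + s).factorial := by
  unfold LCC.mnom
  apply Nat.div_mul_cancel
  have := Nat.prod_factorial_dvd_factorial_sum Finset.univ (Fin.snoc δ s : Fin (K+1) → ℕ)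
  simpa [Fin.prod_univ_castSucc, Fin.sum_univ_castSucc, LCC.wt] using this

lemma wt_update {K : ℕ} (δ : Fin K → ℕ) (i : Fin K) (h : δ i ≠ 0) :
    LCC.wt (Function.update δ i (δ i - 1)) + 1 = LCC.wt δ := by
  unfold LCC.wt
  rw [← Finset.add_sum_erase _ _ (Finset.mem_univ i),
    ← Finset.add_sum_erase Finset.univ δ (Finset.mem_univ i), Function.update_self]
  have : ∑ x ∈ Finset.univ.erase i, Function.update δ i (δ i - 1) x
      = ∑ x ∈ Finset.univ.erase i, δ x :=
    Finset.sum_congr rfl fun j hj => by rw [Function.update_of_ne (Finset.ne_of_mem_erase hj)]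
  rw [this]; omega

lemma fact_update {K : ℕ} (δ : Fin K → ℕ) (i : Fin K) (h : δ i ≠ 0) :
    ∏ r, (δ r).factorial = δ i * ∏ r, (Function.update δ i (δ i - 1) r).factorial := by
  rw [← Finset.mul_prod_erase _ _ (Finset.mem_univ i),
    ← Finset.mul_prod_erase Finset.univ
      (fun r => (Function.update δ i (δ i - 1) r).factorial) (Finset.mem_univ i),
    Function.update_self]
  have : ∏ x ∈ Finset.univ.erase i, (Function.update δ i (δ i - 1) x).factorial
      = ∏ x ∈ Finset.univ.erase i, (δ x).factorial :=
    Finset.prod_congr rfl fun j hj => by rw [Function.update_of_ne (Finset.ne_of_mem_erase hj)]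
  rw [this, ← mul_assoc, Nat.mul_factorial_pred h]

/-- Pascal's rule -/
lemma cc_succ {K : ℕ} (δ : Fin K → ℕ) (n : ℕ) :
    cc δ (n+1) = cc δ n + ∑ i, if δ i = 0 then 0 else cc (Function.update δ i (δ i - 1)) n := by
  by_cases hw : LCC.wt δ ≤ n + 1
  · obtain ⟨s, hs⟩ : ∃ s, n + 1 = LCC.wt δ + s := ⟨n + 1 - LCC.wt δ, by omega⟩
    set P := (∏ r, (δ r).factorial) * s.factorial with hP
    have hPpos : 0 < P := by
      rw [hP]
      exact Nat.mul_pos (Finset.prod_pos fun r _ => Nat.factorial_pos _) (Nat.factorial_pos _)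
    apply Nat.eq_of_mul_eq_mul_right hPpos
    have h1 : cc δ (n+1) * P = (n+1) * n.factorial := by
      rw [cc, if_pos hw, show n + 1 - LCC.wt δ = s by omega, hP, mnom_spec, ← hs,
        Nat.factorial_succ]
    have h2 : cc δ n * P = s * n.factorial := by
      rw [cc]
      split_ifs with h
      · obtain ⟨t, rfl⟩ : ∃ t, s = t + 1 := ⟨s - 1, by omega⟩
        have := mnom_spec δ t
        rw [show LCC.wt δ + t = n by omega] at this
        rw [show n - LCC.wt δ = t by omega, hP, Nat.factorial_succ, ← this]
        ring
      · have : s = 0 := by omega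
        simp [this]
    have h3 : ∀ i, (if δ i = 0 then 0 else cc (Function.update δ i (δ i - 1)) n) * P
        = δ i * n.factorial := by
      intro i
      split_ifs with h
      · simp [h]
      · have hu := wt_update δ i h
        have hm := mnom_spec (Function.update δ i (δ i - 1)) s
        rw [cc, if_pos (by omega), show n - LCC.wt (Function.update δ i (δ i - 1)) = s by omega,
          hP, fact_update δ i h]
        rw [show LCC.wt (Function.update δ i (δ i - 1)) + s = n by omega] at hm
        rw [← hm]; ring
    rw [h1, add_mul (cc δ n), h2, Finset.sum_mul, Finset.sum_congr rfl (fun i _ => h3 i),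
      ← Finset.sum_mul, ← add_mul]
    congr 1
    have : LCC.wt δ = ∑ i, δ i := rfl
    omega
  · rw [cc, if_neg hw, cc, if_neg (by omega), zero_add]
    symm
    refine Finset.sum_eq_zero fun i _ => ?_
    split_ifs with h
    · rfl
    · have hu := wt_update δ i h
      rw [cc, if_neg (by omega)]

lemma TT_pow_ge {K : ℕ} (D : M →ₗ[F] M) (ρ : Fin K → ℕ) (m : M) (n : ℕ) (δ : Fin K → ℕ) :
    (TT D ^ n) (Finsupp.single ρ m) (ρ + δ)
      = ((-1 : F) ^ n * (cc δ n : F)) • (D ^ (n - LCC.wt δ)) m := by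
  induction n generalizing δ with
  | zero =>
    by_cases h : δ = 0
    · subst h
      simp [cc, LCC.wt, LCC.mnom]
    · have : ¬ LCC.wt δ ≤ 0 := by
        intro hw
        apply h
        funext i
        have h0 : LCC.wt δ = 0 := by omega
        unfold LCC.wt at h0
        rw [Finset.sum_eq_zero_iff] at h0
        exact h0 i (Finset.mem_univ _)
      rw [cc, if_neg this]
      rw [pow_zero, Module.End.one_apply, Finsupp.single_apply, if_neg]
      · simp
      · intro e
        apply h
        funext i
        have := congrFun e i
        simpa using this
  | succ n ih =>
    rw [pow_succ', Module.End.mul_apply, TT_apply, ih, map_smul]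
    have hi : ∀ i, (if (ρ + δ) i = 0 then 0 else
        (TT D ^ n) (Finsupp.single ρ m) (Function.update (ρ + δ) i ((ρ + δ) i - 1)))
        = ((-1 : F) ^ n * ((if δ i = 0 then 0 else
          cc (Function.update δ i (δ i - 1)) n : ℕ) : F)) • (D ^ (n + 1 - LCC.wt δ)) m := by
      intro i
      by_cases h : δ i = 0
      · rw [if_pos h]
        simp only [Nat.cast_zero, mul_zero, zero_smul, ite_eq_left_iff]
        intro h1
        -- below `ρ`
        have key : ∀ n (μ : Fin K → ℕ), μ i < ρ i →
            (TT D ^ n) (Finsupp.single ρ m) μ = 0 := by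
          intro n
          induction n with
          | zero =>
            intro μ hμ
            rw [pow_zero, Module.End.one_apply, Finsupp.single_apply, if_neg]
            rintro rfl; omega
          | succ n ih2 =>
            intro μ hμ
            rw [pow_succ', Module.End.mul_apply, TT_apply, ih2 μ hμ, map_zero, zero_add,
              neg_eq_zero]
            refine Finset.sum_eq_zero fun j _ => ?_
            split_ifs with hj
            · rfl
            · apply ih2
              by_cases hij : i = j
              · subst hij; rw [Function.update_self]; omega
              · rwa [Function.update_of_ne hij]
        apply key
        rw [Function.update_self]
        simp only [Pi.add_apply, h] at h1 ⊢
        omega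
      · rw [if_neg (by simp only [Pi.add_apply]; omega), if_neg h]
        have e : Function.update (ρ + δ) i ((ρ + δ) i - 1)
            = ρ + Function.update δ i (δ i - 1) := by
          funext j
          by_cases hj : j = i
          · subst hj; simp; omega
          · simp [Function.update_of_ne hj]
        rw [e, ih]
        have := wt_update δ i h
        rw [show n - LCC.wt (Function.update δ i (δ i - 1)) = n + 1 - LCC.wt δ by omega]
    rw [Finset.sum_congr rfl (fun i _ => hi i), ← Finset.sum_smul, ← Finset.mul_sum]
    have h0 : ((-1 : F) ^ n * (cc δ n : F)) • D ((D ^ (n - LCC.wt δ)) m)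
        = ((-1 : F) ^ n * (cc δ n : F)) • (D ^ (n + 1 - LCC.wt δ)) m := by
      by_cases h : LCC.wt δ ≤ n
      · rw [show n + 1 - LCC.wt δ = (n - LCC.wt δ) + 1 by omega, pow_succ', Module.End.mul_apply]
      · rw [cc, if_neg h]; simp
    rw [h0, ← add_smul, ← mul_add, ← Nat.cast_sum, ← Nat.cast_add, ← cc_succ, ← neg_smul,
      pow_succ]
    congr 1; ring

lemma TT_pow_not {K : ℕ} (D : M →ₗ[F] M) (ρ : Fin K → ℕ) (m : M) (i : Fin K) (n : ℕ)
    (μ : Fin K → ℕ) (hμ : μ i < ρ i) : (TT D ^ n) (Finsupp.single ρ m) μ = 0 := by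
  induction n generalizing μ with
  | zero =>
    rw [pow_zero, Module.End.one_apply, Finsupp.single_apply, if_neg]
    rintro rfl; omega
  | succ n ih2 =>
    rw [pow_succ', Module.End.mul_apply, TT_apply, ih2 μ hμ, map_zero, zero_add,
      neg_eq_zero]
    refine Finset.sum_eq_zero fun j _ => ?_
    split_ifs with hj
    · rfl
    · apply ih2
      by_cases hij : i = j
      · subst hij; rw [Function.update_self]; omega
      · rwa [Function.update_of_ne hij]

lemma dag_eq {K : ℕ} (D : M →ₗ[F] M) (φ : PM M (K+1)) (ν : Fin K → ℕ) :
    LCC.substDag D (fun ρ n => φ (Fin.snoc ρ n : Fin (K+1) → ℕ)) ν = dag D φ ν := by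
  have fin : ∀ (φ : PM M (K+1)) (ρ : Fin K → ℕ) (w : ℕ) (g : ℕ → F), (Function.support (fun s : ℕ =>
      (g s) • (D ^ s) (φ (Fin.snoc ρ (w + s) : Fin (K+1) → ℕ)))).Finite := by
    intro φ ρ w g
    have h1 : (Function.support φ).Finite := φ.hasFiniteSupport
    refine (h1.preimage (f := fun s : ℕ => (Fin.snoc ρ (w + s) : Fin (K+1) → ℕ)) ?_).subset ?_
    · intro a _ b _ hab
      have := congrFun hab (Fin.last K)
      simpa using this
    · intro s hs
      simp only [Set.mem_preimage, Function.mem_support] at hs ⊢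
      intro h0; apply hs; rw [h0]; simp
  induction φ using Finsupp.induction_linear with
  | zero => simp [LCC.substDag]
  | add f g hf hg =>
    rw [map_add, Finsupp.add_apply, ← hf, ← hg]
    simp only [LCC.substDag]
    rw [← Finset.sum_add_distrib]
    refine Finset.sum_congr rfl fun ρ _ => ?_
    rw [← finsum_add_distrib (fin _ _ _ _) (fin _ _ _ _)]
    simp
  | single μ m =>
    rw [dag_single]
    simp only [LCC.substDag]
    by_cases h : Fin.init μ ≤ ν
    · rw [Finset.sum_eq_single (Fin.init μ)]
      · obtain ⟨δ, rfl⟩ : ∃ δ, ν = Fin.init μ + δ :=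
          ⟨ν - Fin.init μ, by rw [add_tsub_cancel_of_le h]⟩
        rw [TT_pow_ge]
        have hδ : (fun r => (Fin.init μ + δ) r - Fin.init μ r) = δ := by
          funext r; simp
        simp only [hδ]
        rw [finsum_eq_single _ (μ (Fin.last K) - LCC.wt δ)]
        · rw [cc]
          by_cases hw : LCC.wt δ ≤ μ (Fin.last K)
          · rw [if_pos hw, Nat.add_sub_cancel' hw, Fin.snoc_init_self, Finsupp.single_eq_same]
          · rw [if_neg hw, Finsupp.single_apply, if_neg]
            · simp
            · intro e
              have := congrFun e (Fin.last K)
              simp at this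
              omega
        · intro s hs
          rw [Finsupp.single_apply, if_neg]
          · simp
          · intro e
            have := congrFun e (Fin.last K)
            simp at this
            omega
      · intro ρ _ hρ
        rw [← finsum_zero (α := ℕ)]
        refine finsum_congr fun s => ?_
        rw [Finsupp.single_apply, if_neg]
        · simp
        · rintro rfl
          simp at hρ
      · intro hn
        exact absurd (Finset.mem_Iic.2 h) hn
    · obtain ⟨i, hi⟩ : ∃ i, ν i < Fin.init μ i := by
        by_contra hc
        push Not at hc
        exact h hc
      rw [TT_pow_not D _ m i _ ν hi]
      refine Finset.sum_eq_zero fun ρ hρ => ?_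
      rw [← finsum_zero (α := ℕ)]
      refine finsum_congr fun s => ?_
      rw [Finsupp.single_apply, if_neg]
      · simp
      · rintro rfl
        simp only [Fin.init_snoc, Finset.mem_Iic] at *
        exact h hρ

end coef
end LCCP

namespace LCCP
open scoped TensorProduct

section faithful
variable {F : Type*} [Field F]
variable {M : Type*} [AddCommGroup M] [Module F M]

/-- elimination of the last variable -/
noncomputable def elim (D : M →ₗ[F] M) (k : ℕ) :
    MvPolynomial (Fin (k+1)) F ⊗[F] M →ₗ[F] PM M k :=
  TensorProduct.lift ((MvPolynomial.basisMonomials (Fin (k+1)) F).constr F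
    (fun μ => dag D ∘ₗ Finsupp.lsingle (⇑μ)))

lemma elim_monomial (D : M →ₗ[F] M) (k : ℕ) (μ : Fin (k+1) →₀ ℕ) (m : M) :
    elim D k (MvPolynomial.monomial μ 1 ⊗ₜ m) = dag D (Finsupp.single (⇑μ) m) := by
  rw [elim, TensorProduct.lift.tmul]
  have := (MvPolynomial.basisMonomials (Fin (k+1)) F).constr_basis F
    (fun μ => dag D ∘ₗ Finsupp.lsingle (M := M) (⇑μ)) μ
  rw [MvPolynomial.coe_basisMonomials] at this
  rw [this]; rfl

lemma elim_kill (D : M →ₗ[F] M) (k : ℕ) (u : MvPolynomial (Fin (k+1)) F ⊗[F] M) :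
    elim D k (D.baseChange (MvPolynomial (Fin (k+1)) F) u
      + (∑ i, MvPolynomial.X i : MvPolynomial (Fin (k+1)) F) • u) = 0 := by
  induction u using TensorProduct.induction_on with
  | zero => simp
  | add x y hx hy =>
    have e : D.baseChange (MvPolynomial (Fin (k+1)) F) (x + y)
      + (∑ i, MvPolynomial.X i : MvPolynomial (Fin (k+1)) F) • (x + y)
      = (D.baseChange (MvPolynomial (Fin (k+1)) F) x
      + (∑ i, MvPolynomial.X i : MvPolynomial (Fin (k+1)) F) • x) +
      (D.baseChange (MvPolynomial (Fin (k+1)) F) y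
      + (∑ i, MvPolynomial.X i : MvPolynomial (Fin (k+1)) F) • y) := by
      rw [map_add, smul_add, add_add_add_comm]
    rw [e, map_add, hx, hy, add_zero]
  | tmul s m =>
    induction s using MvPolynomial.induction_on' with
    | monomial μ r =>
      have e : (MvPolynomial.monomial μ r : MvPolynomial (Fin (k+1)) F) ⊗ₜ[F] m
          = (MvPolynomial.monomial μ 1) ⊗ₜ[F] (r • m) := by
        rw [← TensorProduct.smul_tmul, MvPolynomial.smul_monomial, smul_eq_mul, mul_one]
      rw [e]
      generalize r • m = m
      have hX : ∀ i : Fin (k+1), (MvPolynomial.X i : MvPolynomial (Fin (k+1)) F) •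
          ((MvPolynomial.monomial μ (1 : F)) ⊗ₜ[F] m)
          = (MvPolynomial.monomial (μ + Finsupp.single i 1) (1 : F)) ⊗ₜ[F] m := by
        intro i
        rw [TensorProduct.smul_tmul', smul_eq_mul, MvPolynomial.X, MvPolynomial.monomial_mul,
          one_mul, add_comm (Finsupp.single i 1) μ]
      have hup : ∀ i : Fin (k+1), ((μ + Finsupp.single i 1 : Fin (k+1) →₀ ℕ) : Fin (k+1) → ℕ)
          = Function.update (⇑μ) i (μ i + 1) := by
        intro i
        funext j
        by_cases h : j = i
        · subst h; simp
        · rw [Function.update_of_ne h, Finsupp.add_apply, Finsupp.single_apply,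
            if_neg (Ne.symm h), add_zero]
      rw [LinearMap.baseChange_tmul, Finset.sum_smul, map_add, map_sum, elim_monomial]
      simp only [hX, elim_monomial, hup, dag_single]
      rw [Fin.sum_univ_castSucc]
      have hc : ∀ i : Fin k, Function.update (⇑μ) i.castSucc (μ i.castSucc + 1) (Fin.last k)
          = μ (Fin.last k) := fun i => Function.update_of_ne (Fin.castSucc_lt_last i).ne' _ _
      have hi : ∀ i : Fin k, (Fin.init (Function.update (⇑μ) i.castSucc (μ i.castSucc + 1)) :
          Fin k → ℕ) = Function.update (Fin.init ⇑μ) i (Fin.init (⇑μ) i + 1) := by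
        intro i
        rw [Fin.init_update_castSucc]; rfl
      simp only [hc, hi, Fin.init_update_last, Function.update_self]
      rw [← map_sum, ← add_assoc, ← map_add, pow_succ, Module.End.mul_apply, ← map_add]
      refine Eq.trans (congrArg _ ?_) (map_zero (TT D ^ μ (Fin.last k)))
      simp [TT, shift_single]
    | add p q hp hq =>
      rw [TensorProduct.add_tmul, map_add (D.baseChange (MvPolynomial (Fin (k+1)) F)), smul_add,
        add_add_add_comm, map_add, hp, hq, add_zero]

lemma elim_ev (D : M →ₗ[F] M) (k : ℕ) (φ : PM M k) :
    elim D k (ev (S := MvPolynomial (Fin (k+1)) F) (Fin.init MvPolynomial.X) φ) = φ := by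
  induction φ using Finsupp.induction_linear with
  | zero => simp
  | add x y hx hy => rw [map_add, map_add, hx, hy]
  | single ν m =>
    rw [ev_single]
    have : (∏ i, (Fin.init MvPolynomial.X : Fin k → MvPolynomial (Fin (k+1)) F) i ^ ν i)
      = MvPolynomial.monomial (Finsupp.equivFunOnFinite.symm (Fin.snoc ν 0 : Fin (k+1) → ℕ)) 1 := by
      rw [MvPolynomial.monomial_eq, Finsupp.prod_fintype _ _ (by simp), Fin.prod_univ_castSucc]
      simp [Fin.init]
    rw [this, elim_monomial, dag_single]
    simp

lemma faithful (D : M →ₗ[F] M) (k : ℕ) (φ : PM M k)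
    (h : ev (S := MvPolynomial (Fin (k+1)) F) (Fin.init MvPolynomial.X) φ ∈
      Rg (D.baseChange _) (∑ i, MvPolynomial.X i)) : φ = 0 := by
  obtain ⟨u, hu⟩ := mem_Rg.1 h
  rw [← elim_ev D k φ, ← hu, elim_kill]

end faithful

section ins
variable {F : Type*} [Field F] {S : Type*} [CommRing S] [Algebra F S]
variable {A M : Type*} [AddCommGroup A] [Module F A] [AddCommGroup M] [Module F M]
variable {L : LCC.LCA F A}

/-- coefficients of the action -/
noncomputable def actP (R : LCC.LCAMod F L M) (a : A) : M →ₗ[F] (ℕ →₀ M) where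
  toFun m := Finsupp.ofSupportFinite (R.act a m) (R.act_fin a m)
  map_add' m n := by ext t; simp [Finsupp.ofSupportFinite_coe]
  map_smul' r m := by ext t; simp [Finsupp.ofSupportFinite_coe]

lemma actP_apply (R : LCC.LCAMod F L M) (a : A) (m : M) (n : ℕ) :
    actP R a m n = R.act a m n := rfl

/-- inserting the action of `a` with variable in position `i` -/
noncomputable def insA (R : LCC.LCAMod F L M) (a : A) {K : ℕ} (i : Fin (K+1)) :
    PM M K →ₗ[F] PM M (K+1) :=
  Finsupp.lsum F (fun ρ => (Finsupp.lmapDomain M F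
    (fun t : ℕ => (i.insertNth t ρ : Fin (K+1) → ℕ))) ∘ₗ actP R a)

lemma insA_single (R : LCC.LCAMod F L M) (a : A) {K : ℕ} (i : Fin (K+1)) (ρ m) :
    insA R a i (Finsupp.single ρ m) = Finsupp.mapDomain
      (fun t : ℕ => (i.insertNth t ρ : Fin (K+1) → ℕ)) (actP R a m) := by
  simp [insA]

lemma insA_apply (R : LCC.LCAMod F L M) (a : A) {K : ℕ} (i : Fin (K+1)) (φ : PM M K) (ν) :
    insA R a i φ ν = R.act a (φ (i.removeNth ν)) (ν i) := by
  induction φ using Finsupp.induction_linear with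
  | zero => simp
  | add x y hx hy => rw [map_add, Finsupp.add_apply, hx, hy]; simp
  | single ρ m =>
    rw [insA_single]
    by_cases h : ρ = i.removeNth ν
    · subst h
      conv_lhs => rw [← Fin.insertNth_self_removeNth i ν]
      have := Finsupp.mapDomain_apply (f := fun t : ℕ =>
        (i.insertNth t (i.removeNth ν) : Fin (K+1) → ℕ)) (fun s t hst => by
          have := congrFun hst i; simpa using this) (actP R a m) (ν i)
      simp only [Fin.removeNth_insertNth, Finsupp.single_eq_same]
      exact this
    · rw [Finsupp.single_apply, if_neg h, map_zero]
      apply Finsupp.mapDomain_of_notMem_range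
      rintro ⟨t, rfl⟩
      simp at h

lemma ev_insA (R : LCC.LCAMod F L M) (a : A) {K : ℕ} (i : Fin (K+1)) (φ : PM M K)
    (Λ : Fin (K+1) → S) :
    ev Λ (insA R a i φ) = actS R (Λ i) (1 ⊗ₜ a) (ev (i.removeNth Λ) φ) := by
  induction φ using Finsupp.induction_linear with
  | zero => simp
  | add x y hx hy => simp only [map_add, hx, hy]
  | single ρ m =>
    rw [insA_single, ev_single, actS_evN, evN]
    have e : (∑ᶠ n, (Λ i ^ n) ⊗ₜ[F] R.act a m n)
        = (actP R a m).sum (fun n v => (Λ i ^ n) ⊗ₜ[F] v) := by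
      rw [Finsupp.sum]
      refine finsum_eq_sum_of_support_subset _ fun n hn => ?_
      simp only [Finset.mem_coe, Finsupp.mem_support_iff, actP_apply]
      intro h; apply hn; simp [h]
    rw [e, ev, Finsupp.lsum_apply, Finsupp.sum_mapDomain_index (by simp) (by simp [TensorProduct.tmul_add])]
    rw [Finsupp.smul_sum]
    refine Finsupp.sum_congr fun n _ => ?_
    rw [TensorProduct.smul_tmul', smul_eq_mul, Fin.prod_univ_succAbove _ i]
    simp [Fin.removeNth, mul_comm]

end ins

section mult
variable {F : Type*} [Field F] {S : Type*} [CommRing S] [Algebra F S]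
variable {A W : Type*} [AddCommGroup A] [Module F A] [AddCommGroup W] [Module F W] [Module S W]
  [IsScalarTower F S W]

lemma ext_pure {n : ℕ} (f g : MultilinearMap S (fun _ : Fin n => S ⊗[F] A) W)
    (h : ∀ a : Fin n → A, f (fun i => 1 ⊗ₜ a i) = g (fun i => 1 ⊗ₜ a i)) : f = g := by
  induction n with
  | zero =>
    ext x
    have := h (fun i => i.elim0)
    convert this
  | succ n ih =>
    have : f.curryLeft = g.curryLeft := by
      refine LinearMap.ext fun p => ?_
      induction p using tens_ind with
      | ha p q hp hq => rw [map_add, map_add, hp, hq]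
      | hs s p hp => rw [map_smul, map_smul, hp]
      | h1 a =>
        apply ih
        intro b
        have := h (Fin.cons a b)
        convert this using 1 <;>
        · simp only [MultilinearMap.curryLeft_apply]
          congr 1
          funext i
          refine Fin.cases ?_ (fun j => ?_) i <;> simp
    rw [← MultilinearMap.uncurry_curryLeft f, this, MultilinearMap.uncurry_curryLeft]

/-- base change of multilinear maps -/
lemma exists_ext (F : Type*) [Field F] (S : Type*) [CommRing S] [Algebra F S]
    (A W : Type*) [AddCommGroup A] [Module F A] [AddCommGroup W] [Module F W] [Module S W]
    [IsScalarTower F S W] (n : ℕ) :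
    ∃ e : MultilinearMap F (fun _ : Fin n => A) W →ₗ[F]
      MultilinearMap S (fun _ : Fin n => S ⊗[F] A) W,
      ∀ f a, e f (fun i => 1 ⊗ₜ a i) = f a := by
  induction n with
  | zero =>
    refine ⟨⟨⟨fun f => MultilinearMap.constOfIsEmpty S _ (f 0), ?_⟩, ?_⟩, ?_⟩
    · intro f g; ext; simp
    · intro r f; ext; simp
    · intro f a
      simp
      congr 1; funext i; exact i.elim0
  | succ n ih =>
    obtain ⟨e, he⟩ := ih
    haveI : IsScalarTower F S (MultilinearMap S (fun _ : Fin n => S ⊗[F] A) W) :=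
      ⟨fun r s f => by ext; simp⟩
    refine ⟨⟨⟨fun f => LinearMap.uncurryLeft (LinearMap.liftBaseChange S (e ∘ₗ f.curryLeft)), ?_⟩,
      ?_⟩, ?_⟩
    · intro f g
      apply ext_pure (F := F)
      intro a
      have h : (f + g).curryLeft (a 0) = f.curryLeft (a 0) + g.curryLeft (a 0) := rfl
      simp [h]
    · intro r f
      apply ext_pure (F := F)
      intro a
      have h : (r • f).curryLeft (a 0) = r • f.curryLeft (a 0) := rfl
      simp [h]
    · intro f a
      simp only [LinearMap.coe_mk, AddHom.coe_mk, LinearMap.uncurryLeft_apply,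
        LinearMap.liftBaseChange_tmul, LinearMap.comp_apply, one_smul]
      have := he (f.curryLeft (a 0)) (Fin.tail a)
      refine Eq.trans this ?_
      simp

end mult
end LCCP

namespace LCCP
open scoped TensorProduct

section rep
variable {F : Type*} [Field F] {S : Type*} [CommRing S] [Algebra F S]
variable {A M : Type*} [AddCommGroup A] [Module F A] [AddCommGroup M] [Module F M]
variable {L : LCC.LCA F A}

/-- `f` is a polynomial whose evaluations are given by `v` -/
def Loc (R : LCC.LCAMod F L M) {K : ℕ} (f : (Fin K → ℕ) → M)
    (v : (Fin (K+1) → S) → VV S R) : Prop :=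
  ∃ φ : PM M K, (∀ ν, φ ν = f ν) ∧ ∀ Λ : Fin (K+1) → S, v Λ = emb R (∑ i, Λ i) (ev (Fin.init Λ) φ)

/-- the tuple of pure symbols -/
def tup (F : Type*) [Field F] {S : Type*} [CommRing S] [Algebra F S]
    {A : Type*} [AddCommGroup A] [Module F A] {n : ℕ} (a : Fin n → A) (Λ : Fin n → S) :
    Fin n → (S ⊗[F] A) × S := fun i => (1 ⊗ₜ a i, Λ i)

def Rep (R : LCC.LCAMod F L M) {k : ℕ} (e : (Fin (k+1) → A) → (Fin k → ℕ) → M)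
    (E : (Fin (k+1) → (S ⊗[F] A) × S) → VV S R) : Prop :=
  ∀ a, Loc R (e a) (fun Λ => E (tup F a Λ))

lemma tup_update {n : ℕ} (a : Fin n → A) (Λ : Fin n → S) (i : Fin n) (x : A) :
    tup F (Function.update a i x) Λ = Function.update (tup F a Λ) i (1 ⊗ₜ x, Λ i) := by
  funext j
  by_cases h : j = i
  · subst h; simp [tup]
  · simp [tup, Function.update_of_ne h]

lemma emb_dag (R : LCC.LCAMod F L M) {K : ℕ} (Λ : Fin (K+1) → S) (φ : PM M (K+1)) :
    emb R (∑ i, Λ i) (ev (Fin.init Λ) (dag R.D φ)) = emb R (∑ i, Λ i) (ev Λ φ) :=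
  emb_congr _ _ (ev_dag R.D Λ φ)

lemma emb_TT (R : LCC.LCAMod F L M) {K : ℕ} (Λ : Fin (K+1) → S) (φ : PM M K) :
    emb R (∑ i, Λ i) (ev (Fin.init Λ) (TT R.D φ)) =
      Λ (Fin.last K) • emb R (∑ i, Λ i) (ev (Fin.init Λ) φ) := by
  rw [← map_smul]
  apply emb_congr
  rw [ev_TT]
  have := pow_sub_mem (R.D.baseChange S) (∑ i, Fin.init Λ i) (Λ (Fin.last K)) 1
    (ev (Fin.init Λ) φ)
  rw [pow_one, pow_one] at this
  rw [Fin.sum_univ_castSucc]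
  exact this

lemma emb_perm (R : LCC.LCAMod F L M) {K : ℕ} (Λ : Fin (K+1) → S) (σ : Equiv.Perm (Fin (K+1)))
    (φ : PM M K) :
    emb R (∑ i, Λ i) (ev (Fin.init Λ) (dag R.D (perm F σ (insP F (Fin.last K) 0 φ)))) =
      emb R (∑ i, (Λ ∘ σ) i) (ev (Fin.init (Λ ∘ σ)) φ) := by
  have h : ∑ i, (Λ ∘ σ) i = ∑ i, Λ i := Equiv.sum_comp σ Λ
  rw [emb_dag, ev_perm, ev_insP, h, pow_zero, one_smul, Fin.removeNth_last]

lemma perm_coeff (R : LCC.LCAMod F L M) {K : ℕ} (σ : Equiv.Perm (Fin (K+1))) (φ : PM M K) (ν) :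
    dag R.D (perm F σ (insP F (Fin.last K) 0 φ)) ν = LCC.substDag R.D
      (fun ρ n => if (Fin.snoc ρ n : Fin (K+1) → ℕ) (σ (Fin.last K)) = 0 then
          φ (fun i : Fin K => (Fin.snoc ρ n : Fin (K+1) → ℕ) (σ i.castSucc)) else 0) ν := by
  rw [← dag_eq]
  congr 1
  funext ρ n
  rw [perm_apply, insP_apply, Fin.removeNth_last]
  rfl

lemma emb_inj (R : LCC.LCAMod F L M) {k : ℕ} {φ ψ : PM M k}
    (h : emb R (∑ i, MvPolynomial.X i : MvPolynomial (Fin (k+1)) F)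
        (ev (Fin.init MvPolynomial.X) φ) =
      emb R (∑ i, MvPolynomial.X i) (ev (Fin.init MvPolynomial.X) ψ)) : φ = ψ := by
  rw [← sub_eq_zero, ← map_sub, ← map_sub, emb_eq_zero] at h
  rw [← sub_eq_zero]
  exact faithful R.D k _ h

lemma tmul_smul_alg (r : F) (x : A) : (1 : S) ⊗ₜ[F] (r • x) = (algebraMap F S r) • (1 ⊗ₜ[F] x) := by
  rw [TensorProduct.tmul_smul, algebraMap_smul]

lemma isCBr_of_rep (R : LCC.LCAMod F L M) {k : ℕ} {e : (Fin (k+1) → A) → (Fin k → ℕ) → M}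
    {E : (Fin (k+1) → (MvPolynomial (Fin (k+1)) F ⊗[F] A) × MvPolynomial (Fin (k+1)) F) →
      VV (MvPolynomial (Fin (k+1)) F) R}
    (hr : Rep R e E) (hn : (sys (MvPolynomial (Fin (k+1)) F) R).Nice E) (hs : Skew E) :
    LCC.IsCBr R k e := by
  choose φ hφ hE using hr
  replace hE : ∀ a (Λ : Fin (k+1) → MvPolynomial (Fin (k+1)) F), E (tup F a Λ) =
    emb R (∑ i, Λ i) (ev (Fin.init Λ) (φ a)) := hE
  have hφ' : ∀ a, e a = φ a := fun a => funext fun ν => (hφ a ν).symm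
  have hsl : ∀ (a : Fin (k+1) → A) i, _ := fun a i =>
    slot_iff.1 (hn (tup F a MvPolynomial.X) i (MvPolynomial.X i))
  have hu : ∀ (a : Fin (k+1) → A) (i) (x : A),
    E (Function.update (tup F a MvPolynomial.X) i (1 ⊗ₜ x, MvPolynomial.X i)) =
      emb R (∑ j, MvPolynomial.X j) (ev (Fin.init MvPolynomial.X) (φ (Function.update a i x))) := by
    intro a i x
    rw [← tup_update, hE]
  have hD : ∀ (a : Fin (k+1) → A) (i) (x : A),
      emb R (∑ j, (MvPolynomial.X j : MvPolynomial (Fin (k+1)) F)) (ev (Fin.init MvPolynomial.X) (φ (Function.update a i (L.D x)))) =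
      - ((MvPolynomial.X i : MvPolynomial (Fin (k+1)) F) • emb R (∑ j, MvPolynomial.X j)
        (ev (Fin.init MvPolynomial.X) (φ (Function.update a i x)))) := by
    intro a i x
    obtain ⟨h1, h2, h3⟩ := hsl a i
    have := h3 (1 ⊗ₜ x)
    rw [h1, h2, hu] at this
    have e : (sys (MvPolynomial (Fin (k+1)) F) R).D (1 ⊗ₜ[F] x) = 1 ⊗ₜ[F] L.D x := DS_pure _ _ _
    rw [e, hu] at this
    exact eq_neg_of_add_eq_zero_left this
  refine ⟨?_, ?_, ?_, ?_, ?_, ?_⟩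
  · intro a i x y
    have : φ (Function.update a i (x + y)) = φ (Function.update a i x)
        + φ (Function.update a i y) := by
      apply emb_inj R
      rw [map_add, map_add, ← hu, ← hu, ← hu, TensorProduct.tmul_add]
      exact (hsl a i).1 _ _
    rw [hφ', hφ', hφ', this]; rfl
  · intro a i r x
    have : φ (Function.update a i (r • x)) = r • φ (Function.update a i x) := by
      apply emb_inj R
      rw [map_smul, ← algebraMap_smul (MvPolynomial (Fin (k+1)) F) r (ev _ _), map_smul,
        ← hu, ← hu, tmul_smul_alg]
      exact (hsl a i).2.1 _ _
    rw [hφ', hφ', this]; rfl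
  · intro a
    rw [hφ']; exact (φ a).hasFiniteSupport
  · intro a i x ν
    have : φ (Function.update a i.castSucc (L.D x))
        = - shift F i (φ (Function.update a i.castSucc x)) := by
      apply emb_inj R
      rw [hD, map_neg, map_neg, ev_shift, map_smul]
      rfl
    rw [hφ', hφ', this, Finsupp.neg_apply, shift_apply]
    split_ifs <;> simp
  · intro a x ν
    have : φ (Function.update a (Fin.last k) (L.D x))
        = - TT R.D (φ (Function.update a (Fin.last k) x)) := by
      apply emb_inj R
      rw [hD, map_neg, map_neg, emb_TT]
    rw [hφ', hφ', this, Finsupp.neg_apply, TT_apply, neg_neg]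
  · intro a ν σ
    have : φ a = ((Equiv.Perm.sign σ : ℤˣ) : ℤ) •
        dag R.D (perm F σ (insP F (Fin.last k) 0 (φ (a ∘ σ)))) := by
      apply emb_inj R
      rw [map_zsmul, map_zsmul, emb_perm, ← hE, ← hE]
      have := hs (tup F a MvPolynomial.X) σ
      have e : tup F a (MvPolynomial.X : _ → MvPolynomial (Fin (k+1)) F) ∘ σ
        = tup F (a ∘ σ) (MvPolynomial.X ∘ σ) := rfl
      rw [e] at this
      rw [this, smul_smul, ← Units.val_mul, Int.units_mul_self, Units.val_one, one_smul]
    rw [hφ', this, Finsupp.smul_apply, perm_coeff, hφ' (a ∘ σ)]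

lemma eq_zero_of_rep (R : LCC.LCAMod F L M) {k : ℕ} {e : (Fin (k+1) → A) → (Fin k → ℕ) → M}
    {E : (Fin (k+1) → (MvPolynomial (Fin (k+1)) F ⊗[F] A) × MvPolynomial (Fin (k+1)) F) →
      VV (MvPolynomial (Fin (k+1)) F) R}
    (hr : Rep R e E) (h0 : ∀ x, E x = 0) : e = 0 := by
  funext a ν
  obtain ⟨φ, h1, h2⟩ := hr a
  have : φ = 0 := by
    apply emb_inj R
    have h2' := h2 MvPolynomial.X
    simp only [h0] at h2'
    rw [← h2']; simp
  rw [← h1, this]; rfl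

end rep
end LCCP

namespace LCCP
open scoped TensorProduct

section ex
variable {F : Type*} [Field F] {S : Type*} [CommRing S] [Algebra F S]
variable {A M : Type*} [AddCommGroup A] [Module F A] [AddCommGroup M] [Module F M]
variable {L : LCC.LCA F A}

/-- the polynomial of a bracket -/
noncomputable def cph {R : LCC.LCAMod F L M} {k : ℕ} {c : (Fin (k+1) → A) → (Fin k → ℕ) → M}
    (hc : LCC.IsCBr R k c) (a : Fin (k+1) → A) : PM M k :=
  Finsupp.ofSupportFinite (c a) (hc.fin a)

lemma cph_apply {R : LCC.LCAMod F L M} {k : ℕ} {c : (Fin (k+1) → A) → (Fin k → ℕ) → M}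
    (hc : LCC.IsCBr R k c) (a : Fin (k+1) → A) (ν) : cph hc a ν = c a ν := rfl

noncomputable def cml {R : LCC.LCAMod F L M} {k : ℕ} {c : (Fin (k+1) → A) → (Fin k → ℕ) → M}
    (hc : LCC.IsCBr R k c) (Λ : Fin (k+1) → S) :
    MultilinearMap F (fun _ : Fin (k+1) => A) (VV S R) where
  toFun a := emb R (∑ i, Λ i) (ev (Fin.init Λ) (cph hc a))
  map_update_add' := by
    intro inst a i x y
    rw [Subsingleton.elim inst (instDecidableEqFin _)]
    rw [← map_add, ← map_add]
    congr 2
    ext ν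
    simp only [cph_apply, Finsupp.add_apply, hc.map_add]
    rfl
  map_update_smul' := by
    intro inst a i r x
    rw [Subsingleton.elim inst (instDecidableEqFin _)]
    rw [← algebraMap_smul S r (emb R _ _), ← map_smul, algebraMap_smul, ← map_smul]
    congr 2
    ext ν
    simp only [cph_apply, Finsupp.smul_apply, hc.map_smul]
    rfl

lemma cml_apply {R : LCC.LCAMod F L M} {k : ℕ} {c : (Fin (k+1) → A) → (Fin k → ℕ) → M}
    (hc : LCC.IsCBr R k c) (Λ : Fin (k+1) → S) (a) :
    cml hc Λ a = emb R (∑ i, Λ i) (ev (Fin.init Λ) (cph hc a)) := rfl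

lemma cml_D {R : LCC.LCAMod F L M} {k : ℕ} {c : (Fin (k+1) → A) → (Fin k → ℕ) → M}
    (hc : LCC.IsCBr R k c) (Λ : Fin (k+1) → S) (a) (i : Fin (k+1)) (x : A) :
    cml hc Λ (Function.update a i (L.D x)) + Λ i • cml hc Λ (Function.update a i x) = 0 := by
  rw [cml_apply, cml_apply]
  induction i using Fin.lastCases with
  | last =>
    have : cph hc (Function.update a (Fin.last k) (L.D x))
        = - TT R.D (cph hc (Function.update a (Fin.last k) x)) := by
      ext ν
      rw [cph_apply, hc.sesq₂, Finsupp.neg_apply, TT_apply, neg_neg]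
      rfl
    rw [this, map_neg, map_neg, emb_TT, neg_add_cancel]
  | cast i =>
    have : cph hc (Function.update a i.castSucc (L.D x))
        = - shift F i (cph hc (Function.update a i.castSucc x)) := by
      ext ν
      rw [cph_apply, hc.sesq₁, Finsupp.neg_apply, shift_apply]
      split_ifs <;> simp [cph_apply]
    rw [this, map_neg, map_neg, ev_shift, map_smul]
    exact neg_add_cancel _

lemma cml_skew {R : LCC.LCAMod F L M} {k : ℕ} {c : (Fin (k+1) → A) → (Fin k → ℕ) → M}
    (hc : LCC.IsCBr R k c) (Λ : Fin (k+1) → S) (a) (σ : Equiv.Perm (Fin (k+1))) :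
    cml hc (Λ ∘ σ) (a ∘ σ) = ((Equiv.Perm.sign σ : ℤˣ) : ℤ) • cml hc Λ a := by
  have : cph hc a = ((Equiv.Perm.sign σ : ℤˣ) : ℤ) •
        dag R.D (perm F σ (insP F (Fin.last k) 0 (cph hc (a ∘ σ)))) := by
    ext ν
    rw [cph_apply, hc.skew a ν σ, Finsupp.smul_apply, perm_coeff]
    rfl
  rw [cml_apply hc Λ, this, map_zsmul, map_zsmul, emb_perm, cml_apply,
    smul_smul, ← Units.val_mul, Int.units_mul_self, Units.val_one, one_smul]

theorem exists_rep (S : Type*) [CommRing S] [Algebra F S]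
    {R : LCC.LCAMod F L M} {k : ℕ} {c : (Fin (k+1) → A) → (Fin k → ℕ) → M}
    (hc : LCC.IsCBr R k c) :
    ∃ E : (Fin (k+1) → (S ⊗[F] A) × S) → VV S R, (sys S R).Nice E ∧ Skew E ∧
      ∀ a Λ, E (tup F a Λ) = emb R (∑ i, Λ i) (ev (Fin.init Λ) (cph hc a)) := by
  obtain ⟨e, he⟩ := exists_ext F S A (VV S R) (k+1)
  refine ⟨fun x => e (cml hc (fun i => (x i).2)) (fun i => (x i).1), ?_, ?_, ?_⟩
  · intro y j Λ
    have h1 : ∀ p, (fun i => (Function.update y j (p, Λ) i).2)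
        = Function.update (fun i => (y i).2) j Λ := by
      intro p; funext i
      by_cases h : i = j
      · subst h; simp
      · simp [Function.update_of_ne h]
    have h2 : ∀ p, (fun i => (Function.update y j (p, Λ) i).1)
        = Function.update (fun i => (y i).1) j p := by
      intro p; funext i
      by_cases h : i = j
      · subst h; simp
      · simp [Function.update_of_ne h]
    simp only [h1, h2]
    generalize hΓ : Function.update (fun i => (y i).2) j Λ = Γ
    have hΓj : Γ j = Λ := by rw [← hΓ]; simp
    generalize (fun i => (y i).1) = z
    rw [slot_iff]
    refine ⟨fun p q => MultilinearMap.map_update_add _ _ _ _ _,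
      fun s p => MultilinearMap.map_update_smul _ _ _ _ _, fun p => ?_⟩
    have key : (e (cml hc Γ)).compLinearMap (Function.update (fun _ => LinearMap.id) j
        ((sys S R).D + Λ • LinearMap.id)) = 0 := by
      apply ext_pure (F := F)
      intro a
      rw [MultilinearMap.compLinearMap_apply, zero_apply]
      have e1 : (fun i => (Function.update (fun _ => LinearMap.id) j
        ((sys S R).D + Λ • LinearMap.id) : Fin (k+1) → _ →ₗ[S] _) i ((1:S) ⊗ₜ[F] a i)) =
        Function.update (fun i => (1:S) ⊗ₜ[F] a i) j (1 ⊗ₜ L.D (a j) + Λ • (1 ⊗ₜ a j)) := by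
        funext i
        by_cases h : i = j
        · subst h
          simp only [Function.update_self]
          have e : (sys S R).D (1 ⊗ₜ[F] a i) = 1 ⊗ₜ[F] L.D (a i) := DS_pure _ _ _
          simp [e]
        · simp [Function.update_of_ne h]
      have e2 : ∀ x, Function.update (fun i => (1:S) ⊗ₜ[F] a i) j (1 ⊗ₜ[F] x) =
          fun i => 1 ⊗ₜ[F] (Function.update a j x i) := by
        intro x
        funext i
        by_cases h : i = j
        · subst h; simp
        · simp [Function.update_of_ne h]
      rw [e1, MultilinearMap.map_update_add, MultilinearMap.map_update_smul, e2, e2, he, he,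
        ← hΓj, cml_D]
    have := DFunLike.congr_fun key (Function.update z j p)
    rw [MultilinearMap.compLinearMap_apply, zero_apply] at this
    rw [← this]
    congr 1
    funext i
    by_cases h : i = j
    · subst h; simp
    · simp [Function.update_of_ne h]
  · intro x σ
    have key : (e (cml hc (fun i => (x (σ i)).2))).domDomCongr σ =
        (((Equiv.Perm.sign σ : ℤˣ) : ℤ) : S) • e (cml hc (fun i => (x i).2)) := by
      apply ext_pure (F := F)
      intro a
      rw [MultilinearMap.domDomCongr_apply, smul_apply, he, he, Int.cast_smul_eq_zsmul,
        ← cml_skew]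
      rfl
    have := DFunLike.congr_fun key (fun i => (x i).1)
    rw [MultilinearMap.domDomCongr_apply, smul_apply, Int.cast_smul_eq_zsmul] at this
    exact this
  · intro a Λ
    simp only [tup]
    rw [he, cml_apply]
end ex
end LCCP

namespace LCCP
open scoped TensorProduct

section loc
variable {F : Type*} [Field F] {S : Type*} [CommRing S] [Algebra F S]
variable {A M : Type*} [AddCommGroup A] [Module F A] [AddCommGroup M] [Module F M]
variable {L : LCC.LCA F A} {R : LCC.LCAMod F L M}

lemma Loc.zero {K : ℕ} : Loc R (fun _ : Fin K → ℕ => 0) (fun _ => (0 : VV S R)) :=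
  ⟨0, fun _ => rfl, fun _ => by simp⟩

lemma Loc.add {K : ℕ} {f g : (Fin K → ℕ) → M} {v w : (Fin (K+1) → S) → VV S R}
    (hf : Loc R f v) (hg : Loc R g w) : Loc R (fun ν => f ν + g ν) (fun Λ => v Λ + w Λ) := by
  obtain ⟨φ, h1, h2⟩ := hf
  obtain ⟨ψ, h3, h4⟩ := hg
  exact ⟨φ + ψ, fun ν => by simp [h1, h3], fun Λ => by simp [h2, h4]⟩

lemma Loc.sign {K : ℕ} (n : ℕ) {f : (Fin K → ℕ) → M} {v : (Fin (K+1) → S) → VV S R}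
    (hf : Loc R f v) : Loc R (fun ν => (-1 : F)^n • f ν) (fun Λ => (-1 : S)^n • v Λ) := by
  obtain ⟨φ, h1, h2⟩ := hf
  refine ⟨(-1 : F)^n • φ, fun ν => by simp [h1], fun Λ => ?_⟩
  beta_reduce
  rw [h2]
  rcases Nat.even_or_odd n with h' | h'
  · rw [h'.neg_one_pow, h'.neg_one_pow, one_smul, one_smul]
  · rw [h'.neg_one_pow, h'.neg_one_pow, neg_smul, neg_smul, one_smul, one_smul, map_neg, map_neg]

lemma Loc.sum {ι : Type*} (s : Finset ι) {K : ℕ} {f : ι → (Fin K → ℕ) → M}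
    {v : ι → (Fin (K+1) → S) → VV S R} (h : ∀ i ∈ s, Loc R (f i) (v i)) :
    Loc R (fun ν => ∑ i ∈ s, f i ν) (fun Λ => ∑ i ∈ s, v i Λ) := by
  classical
  induction s using Finset.induction_on with
  | empty => simpa using Loc.zero
  | insert a s ha ih =>
    simp only [Finset.sum_insert ha]
    exact (h a (by simp)).add (ih fun i hi => h i (by simp [hi]))

lemma Loc.congr {K : ℕ} {f g : (Fin K → ℕ) → M} {v w : (Fin (K+1) → S) → VV S R}
    (hf : Loc R f v) (h : ∀ ν, g ν = f ν) (h' : ∀ Λ, w Λ = v Λ) : Loc R g w := by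
  have e1 : g = f := funext h
  have e2 : w = v := funext h'
  rw [e1, e2]; exact hf

lemma snoc_update_last {G : Type*} {k : ℕ} (y : Fin k → G) (z w : G) :
    Function.update (Fin.snoc y z : Fin (k+1) → G) (Fin.last k) w = Fin.snoc y w := by
  simp [Fin.update_snoc_last]

lemma slot_br {k : ℕ} {E : (Fin (k+1) → (S ⊗[F] A) × S) → VV S R} (hn : (sys S R).Nice E)
    (y : Fin k → (S ⊗[F] A) × S) (a b : A) (Λ Γ : S) {B : ℕ} (hB : ∀ n, B ≤ n → L.br a b n = 0) :
    E (Fin.snoc y ((sys S R).brk (1 ⊗ₜ a, Λ) (1 ⊗ₜ b, Γ))) =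
      ∑ p ∈ Finset.range B, Λ ^ p • E (Fin.snoc y (1 ⊗ₜ L.br a b p, Λ + Γ)) := by
  obtain ⟨h, h1, _⟩ := hn (Fin.snoc y (0,0)) (Fin.last k) (Λ + Γ)
  simp only [snoc_update_last] at h1
  have e : (sys S R).brk (1 ⊗ₜ a, Λ) (1 ⊗ₜ b, Γ) = (evN Λ (L.br a b), Λ + Γ) := by
    show (actS (adj L) Λ (1 ⊗ₜ a) (1 ⊗ₜ b), Λ + Γ) = _
    rw [actS_pure]; rfl
  rw [e, ← h1, evN_sum Λ hB, map_sum]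
  refine Finset.sum_congr rfl fun p _ => ?_
  rw [tmul_eq, map_smul, h1]

lemma pr_split {𝓐 V : Type*} [AddCommGroup 𝓐] [Module S 𝓐] [AddCommGroup V] [Module S V]
    (Y : Sys S 𝓐 V) {k : ℕ} (E : (Fin (k+1) → 𝓐 × S) → V) (x : Fin (k+2) → 𝓐 × S) :
    Y.pr E x = (∑ i : Fin (k+1), ∑ j : Fin (k+1), if i < j then
        (-1:S)^(k+i.1+j.1) • E (Fin.snoc (LCC.rm2 i.1 j.1 x) (Y.brk (x i.castSucc) (x j.castSucc)))
        else 0) +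
      ∑ i : Fin (k+1), (-1:S)^(i.1+1) •
        E (Fin.snoc (LCC.rm1 i.1 (Fin.init x)) (Y.brk (x i.castSucc) (x (Fin.last (k+1))))) := by
  have h2 : ∀ i : Fin (k+1), LCC.rm2 i.1 (k+1) x = LCC.rm1 i.1 (Fin.init x) := by
    intro i
    funext r
    simp only [LCC.rm2, LCC.rm1, Fin.init, LCC.skip2, LCC.skip1]
    congr 1
    ext
    have := r.2
    have := i.2
    simp only [Fin.val_castSucc]
    split_ifs <;> omega
  unfold Sys.pr
  rw [Fin.sum_univ_castSucc]
  have h0 : (∑ j : Fin (k+2), if Fin.last (k+1) < j then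
    (-1:S)^(k+(Fin.last (k+1)).1+j.1) • E (Fin.snoc (LCC.rm2 (Fin.last (k+1)).1 j.1 x)
      (Y.brk (x (Fin.last (k+1))) (x j))) else 0) = 0 :=
    Finset.sum_eq_zero fun j _ => if_neg (not_lt.2 (Fin.le_last j))
  rw [h0, add_zero, ← Finset.sum_add_distrib]
  refine Finset.sum_congr rfl fun i _ => ?_
  rw [Fin.sum_univ_castSucc]
  congr 1
  rw [if_pos (Fin.castSucc_lt_last i)]
  simp only [Fin.val_castSucc, Fin.val_last, h2]
  congr 1
  rw [show k + i.1 + (k+1) = 2 * k + (i.1+1) by ring, pow_add, pow_mul]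
  simp

section dr
variable {k : ℕ} {c : (Fin (k+1) → A) → (Fin k → ℕ) → M}

lemma loc1 (hc : LCC.IsCBr R k c)
  {E : (Fin (k+1) → (S ⊗[F] A) × S) → VV S R}
  (hE : ∀ a Λ, E (tup F a Λ) = emb R (∑ i, Λ i) (ev (Fin.init Λ) (cph hc a)))
    (a : Fin (k+2) → A) (i : Fin (k+1)) :
    Loc R (fun ν => R.act (a i.castSucc) (c (LCC.rm1 i.1 a) (LCC.rm1 i.1 ν)) (ν i))
      (fun Λ => (sys S R).act (tup F a Λ i.castSucc) (E (LCC.rm1 i.1 (tup F a Λ)))) := by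
  refine ⟨insA R (a i.castSucc) i (cph hc (LCC.rm1 i.1 a)), fun ν => ?_, fun Λ => ?_⟩ <;> beta_reduce
  · rw [insA_apply, cph_apply, rm1_eq i ν]
  · have e : LCC.rm1 i.1 (tup F a Λ) = tup F (LCC.rm1 i.1 a) (LCC.rm1 i.1 Λ) := rfl
    rw [e, hE, ev_insA]
    refine (act_emb _ _ _ _ _).trans ?_
    have e1 : Λ i.castSucc + ∑ j, LCC.rm1 i.1 Λ j = ∑ j, Λ j := by
      have := rm1_eq i.castSucc Λ
      rw [Fin.val_castSucc] at this
      rw [this, Fin.sum_univ_succAbove Λ i.castSucc]; rfl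
    have e2 : Fin.init (LCC.rm1 i.1 Λ) = i.removeNth (Fin.init Λ) := by
      rw [← rm1_eq]; rfl
    rw [e1, e2]; rfl

lemma loc3 (hc : LCC.IsCBr R k c)
  {E : (Fin (k+1) → (S ⊗[F] A) × S) → VV S R}
  (hE : ∀ a Λ, E (tup F a Λ) = emb R (∑ i, Λ i) (ev (Fin.init Λ) (cph hc a)))
    (a : Fin (k+2) → A) :
    Loc R (LCC.substDag R.D
        (fun ρ n =>
          if ρ (Fin.last k) = 0 then
            R.act (a (Fin.last (k+1))) (c (Fin.init a) (Fin.init ρ)) n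
          else 0))
      (fun Λ => (sys S R).act (tup F a Λ (Fin.last (k+1)))
        (E (LCC.rm1 (Fin.last (k+1)).1 (tup F a Λ)))) := by
  refine ⟨dag R.D (insA R (a (Fin.last (k+1))) (Fin.last (k+1)) (insP F (Fin.last k) 0
    (cph hc (Fin.init a)))), fun ν => ?_, fun Λ => ?_⟩ <;> beta_reduce
  · rw [← dag_eq]
    congr 1
    funext ρ n
    rw [insA_apply, Fin.removeNth_last, Fin.init_snoc, Fin.snoc_last, insP_apply,
      Fin.removeNth_last]
    split_ifs
    · rfl
    · simp
  · rw [rm1_eq, Fin.removeNth_last]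
    have e : Fin.init (tup F a Λ) = tup F (Fin.init a) (Fin.init Λ) := rfl
    rw [e, hE, emb_dag, ev_insA, Fin.removeNth_last, ev_insP, Fin.removeNth_last, pow_zero,
      one_smul]
    refine (act_emb _ _ _ _ _).trans ?_
    rw [Fin.sum_univ_castSucc Λ, add_comm]
    rfl

lemma c_zero_last (hc : LCC.IsCBr R k c) (y : Fin k → A) :
    c (Fin.snoc y 0) = 0 := by
  have := hc.map_smul (Fin.snoc y 0) (Fin.last k) 0 0
  rw [zero_smul, zero_smul, snoc_update_last] at this
  exact this

lemma tup_snoc {n : ℕ} (a : Fin n → A) (Λ : Fin n → S) (x : A) (s : S) :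
    (Fin.snoc (tup F a Λ) (1 ⊗ₜ x, s) : Fin (n+1) → (S ⊗[F] A) × S)
      = tup F (Fin.snoc a x) (Fin.snoc Λ s) := by
  funext i
  induction i using Fin.lastCases with
  | last => simp [tup]
  | cast i => simp [tup]

lemma loc4 (hc : LCC.IsCBr R k c)
  {E : (Fin (k+1) → (S ⊗[F] A) × S) → VV S R}
  (hE : ∀ a Λ, E (tup F a Λ) = emb R (∑ i, Λ i) (ev (Fin.init Λ) (cph hc a)))
    (hn : (sys S R).Nice E) (a : Fin (k+2) → A) (i : Fin (k+1)) :
    Loc R (fun ν => c (Fin.snoc (LCC.rm1 i.1 (Fin.init a))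
        (L.br (a i.castSucc) (a (Fin.last (k+1))) (ν i))) (LCC.rm1 i.1 ν))
      (fun Λ => E (Fin.snoc (LCC.rm1 i.1 (Fin.init (tup F a Λ)))
        ((sys S R).brk (tup F a Λ i.castSucc) (tup F a Λ (Fin.last (k+1)))))) := by
  obtain ⟨B, hB⟩ := bound_of_fin (L.br_fin (a i.castSucc) (a (Fin.last (k+1))))
  refine ⟨∑ p ∈ Finset.range B, insP F i p (cph hc (Fin.snoc (LCC.rm1 i.1 (Fin.init a))
        (L.br (a i.castSucc) (a (Fin.last (k+1))) p))), fun ν => ?_, fun Λ => ?_⟩ <;> beta_reduce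
  · rw [Finsupp.finsetSum_apply]
    simp only [insP_apply, cph_apply]
    rw [Finset.sum_ite_eq, rm1_eq i ν]
    split_ifs with h
    · rfl
    · rw [hB _ (by simpa using h), c_zero_last hc]; rfl
  · have e : LCC.rm1 i.1 (Fin.init (tup F a Λ)) =
      tup (S := S) F (LCC.rm1 i.1 (Fin.init a)) (LCC.rm1 i.1 (Fin.init Λ)) := rfl
    refine (slot_br (R := R) hn _ _ _ _ _ hB).trans ?_
    rw [map_sum, map_sum]
    refine Finset.sum_congr rfl fun p _ => ?_
    rw [e, tup_snoc, hE, ev_insP, map_smul, Fin.init_snoc, rm1_eq]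
    have e1 : ∑ j, (Fin.snoc (i.removeNth (Fin.init Λ)) (Λ i.castSucc + Λ (Fin.last (k+1))) :
        Fin (k+1) → S) j = ∑ j, Λ j := by
      rw [Fin.sum_univ_castSucc, Fin.sum_univ_castSucc Λ,
        Fin.sum_univ_succAbove (fun j : Fin (k+1) => Λ j.castSucc) i]
      simp only [Fin.snoc_castSucc, Fin.snoc_last]
      simp only [Fin.removeNth, Fin.init]
      ring
    rw [e1]; rfl
end dr

lemma rm2_eq_rem {G : Type*} {k : ℕ} {i j : Fin (k+2)} (h : i < j) (x : Fin (k+3) → G) :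
    LCC.rm2 i.1 j.1 x = i.removeNth (j.castSucc.removeNth x) := by
  rw [rm2_eq h, ← rm1_eq, ← rm1_eq]; rfl

lemma rm2_init {G : Type*} {k : ℕ} {i j : Fin (k+2)} (h : i < j) (x : Fin (k+3) → G) :
    LCC.rm2 i.1 j.1 x = Fin.snoc (LCC.rm2 i.1 j.1 (Fin.init x)) (x (Fin.last (k+2))) := by
  funext r
  have h' : i.1 < j.1 := h
  have := j.2
  induction r using Fin.lastCases with
  | last =>
    rw [Fin.snoc_last]
    simp only [LCC.rm2, LCC.skip2, Fin.val_last]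
    congr 1
    apply Fin.ext
    simp only [Fin.val_last]
    split_ifs <;> omega
  | cast r =>
    rw [Fin.snoc_castSucc]
    rfl

lemma rm2_snoc {G : Type*} {k : ℕ} {i j : Fin (k+2)} (h : i < j) (x : Fin (k+2) → G) (z : G) :
    LCC.rm2 i.1 j.1 (Fin.snoc x z : Fin (k+3) → G) = Fin.snoc (LCC.rm2 i.1 j.1 x) z := by
  rw [rm2_init h, Fin.init_snoc, Fin.snoc_last]

lemma sum_rm2 {k : ℕ} {i j : Fin (k+2)} (h : i < j) (Λ : Fin (k+3) → S) :
    ∑ r, LCC.rm2 i.1 j.1 Λ r + (Λ i.castSucc + Λ j.castSucc) = ∑ r, Λ r := by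
  rw [rm2_eq_rem h, Fin.sum_univ_succAbove Λ j.castSucc,
    Fin.sum_univ_succAbove (fun r => Λ (j.castSucc.succAbove r)) i]
  have : j.castSucc.succAbove i = i.castSucc := Fin.succAbove_of_castSucc_lt _ _ h
  rw [this]
  simp only [Fin.removeNth]
  ring

lemma loc2 {s : ℕ} {c : (Fin (s+2) → A) → (Fin (s+1) → ℕ) → M} (hc : LCC.IsCBr R (s+1) c)
  {E : (Fin (s+2) → (S ⊗[F] A) × S) → VV S R}
  (hE : ∀ a Λ, E (tup F a Λ) = emb R (∑ i, Λ i) (ev (Fin.init Λ) (cph hc a)))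
    (hn : (sys S R).Nice E) (a : Fin (s+3) → A) {i j : Fin (s+2)} (hij : i < j) :
    Loc R (fun ν => ∑ p ∈ Finset.range (ν i + 1),
            LCC.substDag R.D
              (fun ρ n =>
                if ρ i = 0 ∧ ρ j = 0 then
                  c (Fin.snoc (Fin.snoc (LCC.rm2 i.1 j.1 (Fin.init a)) (a (Fin.last (s+2))))
                      (L.br (a i.castSucc) (a j.castSucc) p))
                    (Fin.snoc (LCC.rm2 i.1 j.1 ρ) n)
                else 0)
              (Function.update ν i (ν i - p)))
      (fun Λ => E (Fin.snoc (LCC.rm2 i.1 j.1 (tup F a Λ))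
        ((sys S R).brk (tup F a Λ i.castSucc) (tup F a Λ j.castSucc)))) := by
  obtain ⟨B, hB⟩ := bound_of_fin (L.br_fin (a i.castSucc) (a j.castSucc))
  let w : ℕ → PM M (s+1) := fun p => cph hc (Fin.snoc (LCC.rm2 i.1 j.1 a)
    (L.br (a i.castSucc) (a j.castSucc) p))
  let χ : ℕ → PM M (s+2) := fun p => dag R.D (insP F j.castSucc 0 (insP F i 0 (w p)))
  have hχ0 : ∀ p, B ≤ p → χ p = 0 := by
    intro p hp
    have : w p = 0 := by
      ext ν
      simp only [w]
      rw [cph_apply, hB p hp, c_zero_last hc]; rfl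
    simp only [χ, this, map_zero]
  have hχ : ∀ p ν, LCC.substDag R.D
              (fun ρ n =>
                if ρ i = 0 ∧ ρ j = 0 then
                  c (Fin.snoc (Fin.snoc (LCC.rm2 i.1 j.1 (Fin.init a)) (a (Fin.last (s+2))))
                      (L.br (a i.castSucc) (a j.castSucc) p))
                    (Fin.snoc (LCC.rm2 i.1 j.1 ρ) n)
                else 0) ν = χ p ν := by
    intro p ν
    simp only [χ]
    rw [← dag_eq]
    congr 1
    funext ρ n
    have : j.castSucc.succAbove i = i.castSucc := Fin.succAbove_of_castSucc_lt _ _ hij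
    have e : j.castSucc.removeNth (Fin.snoc ρ n : Fin (s+3) → ℕ) i = ρ i := by
      simp only [Fin.removeNth, this, Fin.snoc_castSucc]
    rw [insP_apply, insP_apply, Fin.snoc_castSucc, e, ← rm2_eq_rem hij, rm2_snoc hij,
      ← rm2_init hij]
    by_cases h1 : ρ i = 0 <;> by_cases h2 : ρ j = 0 <;> simp [h1, h2, w, cph_apply]
  refine ⟨∑ p ∈ Finset.range B, ((shift F i : Module.End F (PM M (s+2))) ^ p) (χ p),
    fun ν => ?_, fun Λ => ?_⟩ <;> beta_reduce
  · rw [Finsupp.finsetSum_apply]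
    simp only [shift_pow_apply, hχ]
    rw [← Finset.sum_filter]
    symm
    rw [← Finset.sum_subset (s₁ := (Finset.range B).filter (fun p => p ≤ ν i))
      (s₂ := Finset.range (ν i + 1))]
    · intro p hp
      simp only [Finset.mem_filter, Finset.mem_range] at hp ⊢
      omega
    · intro p hp hp'
      simp only [Finset.mem_filter, Finset.mem_range] at hp hp'
      rw [hχ0 p (by omega)]; rfl
  · have e : LCC.rm2 i.1 j.1 (tup F a Λ) =
      tup (S := S) F (LCC.rm2 i.1 j.1 a) (LCC.rm2 i.1 j.1 Λ) := rfl
    refine (slot_br (R := R) hn _ _ _ _ _ hB).trans ?_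
    rw [map_sum, map_sum]
    refine Finset.sum_congr rfl fun p _ => ?_
    rw [e, tup_snoc, hE, ev_shift_pow, map_smul, Fin.init_snoc]
    simp only [χ]
    rw [emb_dag, ev_insP, ev_insP, pow_zero, pow_zero, one_smul, one_smul, ← rm2_eq_rem hij]
    have e1 : ∑ r, (Fin.snoc (LCC.rm2 i.1 j.1 Λ) (Λ i.castSucc + Λ j.castSucc) :
        Fin (s+2) → S) r = ∑ r, Λ r := by
      rw [Fin.sum_univ_castSucc, ← sum_rm2 hij Λ]
      simp only [Fin.snoc_castSucc, Fin.snoc_last]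
    rw [e1]; rfl

theorem rep_dRaw {k : ℕ} {c : (Fin (k+1) → A) → (Fin k → ℕ) → M} (hc : LCC.IsCBr R k c)
    {E : (Fin (k+1) → (S ⊗[F] A) × S) → VV S R}
    (hE : ∀ a Λ, E (tup F a Λ) = emb R (∑ i, Λ i) (ev (Fin.init Λ) (cph hc a)))
    (hn : (sys S R).Nice E) (hs : Skew E) :
    Rep R (LCC.dRaw L R c) ((sys S R).dd E) := by
  intro a
  have hp : Loc R (LCC.dPair L R c a) (fun Λ => ∑ i : Fin (k+1), ∑ j : Fin (k+1), if i < j then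
        (-1:S)^(k+i.1+j.1) • E (Fin.snoc (LCC.rm2 i.1 j.1 (tup F a Λ))
          ((sys S R).brk (tup F a Λ i.castSucc) (tup F a Λ j.castSucc)))
        else 0) := by
    cases k with
    | zero =>
      refine Loc.zero.congr (fun ν => rfl) (fun Λ => ?_)
      simp
    | succ s =>
      refine Loc.sum _ fun i _ => Loc.sum _ fun j _ => ?_
      by_cases h : i < j
      · refine ((loc2 hc hE hn a h).sign (s + i.1 + j.1 + 1)).congr (fun ν => ?_) (fun Λ => ?_)
        · beta_reduce; rw [if_pos h]
        · beta_reduce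
          rw [if_pos h, show s + 1 + i.1 + j.1 = s + i.1 + j.1 + 1 by ring]
      · refine Loc.zero.congr (fun ν => ?_) (fun Λ => ?_) <;> beta_reduce <;> rw [if_neg h]
  have h1 := Loc.sum Finset.univ fun i _ => (loc1 hc hE a i).sign i.1
  have h3 := (loc3 hc hE a).sign (k+1)
  have h4 := Loc.sum Finset.univ fun i _ => (loc4 hc hE hn a i).sign (i.1+1)
  refine (((h1.add hp).add h3).add h4).congr (fun ν => rfl) (fun Λ => ?_)
  beta_reduce
  rw [dd_explicit hs, pr_split, Fin.sum_univ_castSucc]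
  simp only [Fin.val_castSucc, Fin.val_last]
  abel

lemma rep_of_eq {k : ℕ} {c : (Fin (k+1) → A) → (Fin k → ℕ) → M} (hc : LCC.IsCBr R k c)
    {E : (Fin (k+1) → (S ⊗[F] A) × S) → VV S R} (h : Rep R c E) :
    ∀ a Λ, E (tup F a Λ) = emb R (∑ i, Λ i) (ev (Fin.init Λ) (cph hc a)) := by
  intro a Λ
  obtain ⟨φ, h1, h2⟩ := h a
  have : φ = cph hc a := by ext ν; rw [h1, cph_apply]
  rw [← this]; exact h2 Λ

lemma skew_zero {G V : Type*} [AddCommGroup V] (E : (Fin 0 → G) → V) : Skew E := by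
  intro x σ
  have : σ = 1 := Subsingleton.elim _ _
  subst this
  simp

theorem rep_dZero (R : LCC.LCAMod F L M) (m : M) :
    Rep R (LCC.dZero R m) ((sys S R).dd (fun _ : Fin 0 → _ => emb R 0 (1 ⊗ₜ m))) := by
  intro a
  refine ⟨dag R.D (insA R (a 0) 0 (Finsupp.single (fun i => i.elim0) m)), fun ν => ?_, fun Λ => ?_⟩
  · rw [← dag_eq]
    have hI : Finset.Iic ν = {ν} := by
      ext x; simp [Subsingleton.elim x ν]
    simp only [LCC.substDag, hI, Finset.sum_singleton, LCC.dZero]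
    refine finsum_congr fun n => ?_
    rw [insA_apply]
    have e1 : (0 : Fin 1).removeNth (Fin.snoc ν (LCC.wt (fun r => ν r - ν r) + n) : Fin 1 → ℕ)
      = fun i => i.elim0 := Subsingleton.elim _ _
    have e2 : (Fin.snoc ν (LCC.wt (fun r => ν r - ν r) + n) : Fin 1 → ℕ) 0 = n := by
      have := Fin.snoc_last (α := fun _ : Fin 1 => ℕ) (LCC.wt (fun r => ν r - ν r) + n) ν
      refine Eq.trans this ?_
      simp [LCC.wt]
    rw [e1, e2, Finsupp.single_eq_same]
    simp [LCC.wt, LCC.mnom, Nat.div_self (Nat.factorial_pos n)]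
  · beta_reduce
    rw [emb_dag, ev_insA, ev_single]
    have hx : tup F a Λ = Fin.cons (1 ⊗ₜ a 0, Λ 0) (fun i => i.elim0) := by
      funext i
      have : i = 0 := Fin.ext (by have := i.2; omega)
      subst this
      rfl
    rw [hx, dd_cons_zero]
    simp only [Sys.Lie, Finset.univ_eq_empty, Finset.sum_empty, sub_zero]
    refine (act_emb _ _ _ _ _).trans ?_
    simp

end loc

open LCC in
theorem main_thm
    {F : Type*} [Field F] [CharZero F]
    {A M : Type*} [AddCommGroup A] [Module F A] [AddCommGroup M] [Module F M]
    (L : LCA F A) (R : LCAMod F L M) :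
    (∀ m : M, IsCBr R 0 (dZero R m) ∧ dRaw L R (dZero R m) = 0) ∧
    (∀ (k : ℕ) (c : (Fin (k+1) → A) → (Fin k → ℕ) → M), IsCBr R k c →
      IsCBr R (k+1) (dRaw L R c) ∧ dRaw L R (dRaw L R c) = 0) := by
  have nz : ∀ (S : Type _) [CommRing S] [Algebra F S] (m : M),
      (sys S R).Nice (fun _ : Fin 0 → (S ⊗[F] A) × S => emb R 0 (1 ⊗ₜ m)) :=
    fun S _ _ m y j => j.elim0
  refine ⟨fun m => ?_, fun k c hc => ?_⟩
  · have h1 : IsCBr R 0 (dZero R m) :=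
      isCBr_of_rep R (rep_dZero R m) (nz _ m).dd (Skew.dd (nz _ m) (skew_zero _))
    refine ⟨h1, ?_⟩
    exact eq_zero_of_rep R (rep_dRaw h1 (rep_of_eq h1 (rep_dZero R m)) (nz _ m).dd
      (Skew.dd (nz _ m) (skew_zero _))) (dd_dd (nz _ m))
  · have h1 : IsCBr R (k+1) (dRaw L R c) := by
      obtain ⟨E, hn, hs, hE⟩ := exists_rep (MvPolynomial (Fin (k+2)) F) hc
      exact isCBr_of_rep R (rep_dRaw hc hE hn hs) hn.dd (Skew.dd hn hs)
    refine ⟨h1, ?_⟩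
    obtain ⟨E, hn, hs, hE⟩ := exists_rep (MvPolynomial (Fin (k+3)) F) hc
    exact eq_zero_of_rep R (rep_dRaw h1 (rep_of_eq h1 (rep_dRaw hc hE hn hs)) hn.dd
      (Skew.dd hn hs)) (dd_dd hn)
end LCCP

open LCC in
/-- For every `k ≥ 0` and every `c ∈ C^k(A,M)`, the element `dc`
lies in `C^{k+1}(A,M)` (it satisfies conditions B1, B2, B3) and `d(dc) = 0`.
Hence `(C^•(A,M), d)` is a cohomology complex.  (Here `C⁰ = M/∂^M M` is treated via
representatives `m : M`, with `(d∫m)(a) = a_{−∂^M} m`, and a `(k+1)`-`λ`-bracket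
is recorded through the coefficients of its `λ`-expansion.) -/
theorem d_closed_and_d_squared_zero
    {F : Type*} [Field F] [CharZero F]
    {A M : Type*} [AddCommGroup A] [Module F A] [AddCommGroup M] [Module F M]
    (L : LCA F A) (R : LCAMod F L M) :
    (∀ m : M, IsCBr R 0 (dZero R m) ∧ dRaw L R (dZero R m) = 0) ∧
    (∀ (k : ℕ) (c : (Fin (k+1) → A) → (Fin k → ℕ) → M), IsCBr R k c →
      IsCBr R (k+1) (dRaw L R c) ∧ dRaw L R (dRaw L R c) = 0) := by
  exact LCCP.main_thm L R
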